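/- arXiv:1810.02667 — 2 statements merged into one kernel-verified Lean document; each statement's English description precedes it below -/
import Mathlib

section
/- Let u, v, w ∈ [1,γ]. Suppose p, q, r, s ∈ [1,γ] are least upper bounds in ([1,γ],≤) of {u,v}, {v,w}, {u,w}, and {u,v,w} respectively, and define a, b, c, d, e, f, g, h, i ∈ W by ua = vb = p, vc = wd = q, ue = wf = r, and pg = qh = ri = s. Then ag = ei and ag is a least upper bound of {a,e} in ([1,γ],≤); bg = ch and bg is a least upper bound of {b,c} in ([1,γ],≤); and dh = fi and dh is a least upper bound of {d,f} in ([1,γ],≤). -/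
/-!
The statement follows from the existence of meets in `[1, γ]`. If `x` is an upper bound of
`u⁻¹ p` and `u⁻¹ r` and `y` is the meet of `x` and `u⁻¹ s`, then `u y ≤ s ≤ γ` and both `p ≤ u y`
and `r ≤ u y`, so `s ≤ u y` because `s` is the join of `u, v, w`; hence `y = u⁻¹ s ≤ x`. The three
claims are this fact applied at `u`, `v` and `w`.

That `[1, γ]` has meets is proved without classification, in the geometric representation `V` of
`W`, whose Tits form `⟨ , ⟩` is positive definite because `W` is finite. Write `γ` as the product of
a word `L` and let `E` be the bilinear form with `E x y + E y x = 2 ⟨x, y⟩` which is upper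
triangular on the simple roots in the order of `L`. A subspace `X` is noncrossing, with element `g`,
if `1 - g` maps `V` to `X` and `E ((1 - g) v, m) = 2 ⟨v, m⟩` for `m ∈ X`. Then `X` is the image of
`1 - g`, it is spanned by roots, and for a root `ρ ∈ X` the section of `X` by `E (ρ, ·) = 0` is
again noncrossing; consequently reflection length is the dimension of `X` and the reflection order
on `[1, γ]` is inclusion of noncrossing subspaces.

The main step is `hasMeetAt`: if `P` lies in the cones spanned by the positive roots of two
noncrossing subspaces `X` and `Z`, then `P` lies in a noncrossing subspace contained in both. Let
`i` be the first letter of `L`. If `αᵢ` lies in both `X` and `Z`, then each cone is the sum of the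
ray of `αᵢ` and the cone of the section by `{vᵢ = 0}`, and induction on the length of `L` applies.
Otherwise everything can be rotated by `sᵢ`, the word becoming the cyclic shift of `L`, and the
rotated point lies again in the two cones. Since a Coxeter element fixes no nonzero vector, `P ≠ 0`
cannot remain positive under all rotations, so the first case eventually occurs. Applying this to a
generic point of the cone of `X ∩ Z` yields the meet.
-/

variable {B : Type*} {W : Type*} [Group W] {M : CoxeterMatrix B}

/-- The reflection length of `w`: the least `k` such that `w` is a product of `k`
reflections (conjugates of simple reflections). -/
noncomputable def rlen (cs : CoxeterSystem M W) (w : W) : ℕ :=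
  sInf {k | ∃ l : List W, (∀ t ∈ l, cs.IsReflection t) ∧ l.length = k ∧ l.prod = w}

/-- The reflection (absolute) order on `W`: `u ≤ w` iff `ℓ(w) = ℓ(u) + ℓ(u⁻¹w)`. -/
def rle (cs : CoxeterSystem M W) (u w : W) : Prop :=
  rlen cs w = rlen cs u + rlen cs (u⁻¹ * w)

/-- A Coxeter element: a conjugate of a product of all the simple reflections,
each occurring exactly once, in some order. -/
def IsCoxeterElement [Fintype B] (cs : CoxeterSystem M W) (γ : W) : Prop :=
  ∃ (v : W) (l : List B), l.Nodup ∧ (∀ i : B, i ∈ l) ∧ γ = v * cs.wordProd l * v⁻¹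

/-- `p` is a least upper bound of the set `s` within the interval `[1,γ]`
under the reflection order. -/
def IsIntervalLUB (cs : CoxeterSystem M W) (γ : W) (s : Set W) (p : W) : Prop :=
  rle cs p γ ∧ (∀ x ∈ s, rle cs x p) ∧
    ∀ r, rle cs r γ → (∀ x ∈ s, rle cs x r) → rle cs p r

namespace Noncrossing

open Real Polynomial.Chebyshev

/-! ### Reflections -/

section Reflection

variable {V : Type*} [AddCommGroup V] [Module ℝ V] {F : LinearMap.BilinForm ℝ V} {v w : V} {θ : ℝ}

/-- The orthogonal reflection, for the bilinear form `F`, in a vector `v` with `F v v = 1`. -/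
noncomputable def refl (F : LinearMap.BilinForm ℝ V) (v : V) : Module.End ℝ V :=
  Module.preReflection v ((2 : ℝ) • F v)

lemma refl_apply (v x : V) : refl F v x = x - (2 * F v x) • v := by
  simp [refl, Module.preReflection_apply]

lemma refl_apply_self (hv : F v v = 1) : refl F v v = -v :=
  Module.preReflection_apply_self (by simp [hv])

lemma refl_refl (hv : F v v = 1) (x : V) : refl F v (refl F v x) = x :=
  Module.involutive_preReflection (by simp [hv]) x

lemma refl_mul_self (hv : F v v = 1) : refl F v * refl F v = 1 :=
  LinearMap.ext (refl_refl hv)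

lemma form_refl_refl (hF : F.IsSymm) (hv : F v v = 1) (x y : V) :
    F (refl F v x) (refl F v y) = F x y := by
  simp only [refl_apply, map_sub, map_smul, LinearMap.sub_apply, LinearMap.smul_apply, smul_eq_mul,
    hv, hF.eq x v]
  ring

lemma refl_map_mul {g : Module.End ℝ V} (hg : ∀ x y, F (g x) (g y) = F x y) (v : V) :
    refl F (g v) * g = g * refl F v := by
  ext x
  simp [refl_apply, hg]

lemma refl_apply_eval_U (hw : F w w = 1) (hwv : F w v = -cos θ) (n : ℤ) :
    refl F w ((U ℝ n).eval (cos θ) • v + (U ℝ (n - 1)).eval (cos θ) • w) =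
      (U ℝ n).eval (cos θ) • v + (U ℝ (n + 1)).eval (cos θ) • w := by
  have hU := congrArg (Polynomial.eval (cos θ)) (U_add_two ℝ (n - 1))
  rw [show n - 1 + 2 = n + 1 by ring, sub_add_cancel, Polynomial.eval_sub, Polynomial.eval_mul,
    Polynomial.eval_mul, Polynomial.eval_X, Polynomial.eval_ofNat] at hU
  rw [hU]
  simp only [refl_apply, map_add, map_smul, hw, hwv]
  module

lemma refl_mul_refl_pow_apply (hv : F v v = 1) (hw : F w w = 1) (hvw : F v w = -cos θ)
    (hwv : F w v = -cos θ) (k : ℕ) :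
    ((refl F v * refl F w) ^ k) v =
      (U ℝ (2 * k)).eval (cos θ) • v + (U ℝ (2 * k - 1)).eval (cos θ) • w := by
  induction k with
  | zero => simp
  | succ k ih =>
    have h := refl_apply_eval_U hv hvw (2 * k + 1)
    rw [add_sub_cancel_right, add_assoc, one_add_one_eq_two] at h
    rw [pow_succ', Module.End.mul_apply, ih, Module.End.mul_apply, refl_apply_eval_U hw hwv,
      add_comm, h, add_comm]
    push_cast
    ring_nf

lemma sin_pi_div_pos {m : ℕ} (hm : 2 ≤ m) : 0 < sin (π / m) := by
  have hm' : (1 : ℝ) < m := by exact_mod_cast hm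
  exact sin_pos_of_pos_of_lt_pi (by positivity) (div_lt_self pi_pos hm')

lemma eval_U_cos_pi_div_nonneg {m : ℕ} (hm : m ≠ 1) {n : ℤ} (hn : -1 ≤ n)
    (hnm : m = 0 ∨ n + 1 ≤ m) : 0 ≤ (U ℝ n).eval (cos (π / m)) := by
  have hn' : (0 : ℝ) ≤ n + 1 := by exact_mod_cast neg_le_iff_add_nonneg.1 hn
  obtain rfl | hpos := Nat.eq_zero_or_pos m
  · simpa only [CharP.cast_eq_zero, div_zero, cos_zero, U_eval_one] using hn'
  · refine nonneg_of_mul_nonneg_left ?_ (sin_pi_div_pos (m := m) (by omega))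
    rw [U_real_cos]
    have hnm' : (n + 1 : ℝ) ≤ m := by exact_mod_cast hnm.resolve_left hpos.ne'
    refine sin_nonneg_of_nonneg_of_le_pi (by positivity) ?_
    rw [← mul_div_assoc, div_le_iff₀ (by positivity), mul_comm]
    exact mul_le_mul_of_nonneg_left hnm' pi_pos.le

lemma eval_U_cos_pi_div_period {m : ℕ} (hm : 2 ≤ m) :
    (U ℝ (2 * m)).eval (cos (π / m)) = 1 ∧ (U ℝ (2 * m - 1)).eval (cos (π / m)) = 0 := by
  have hs := (sin_pi_div_pos hm).ne'
  have hm0 : (m : ℝ) ≠ 0 := by positivity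
  constructor <;> apply mul_right_cancel₀ hs <;> rw [U_real_cos]
  · rw [one_mul, ← sin_add_two_pi (π / m)]
    congr 1
    push_cast
    field_simp
    ring
  · rw [zero_mul, ← sin_two_pi]
    congr 1
    push_cast
    field_simp
    ring

lemma refl_mul_refl_pow_sub_mem_span (k : ℕ) (x : V) :
    ((refl F v * refl F w) ^ k) x - x ∈ Submodule.span ℝ {v, w} := by
  have hrefl : ∀ u ∈ ({v, w} : Set V), ∀ y, refl F u y - y ∈ Submodule.span ℝ {v, w} := by
    intro u hu y
    rw [refl_apply, sub_sub_cancel_left]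
    exact neg_mem (Submodule.smul_mem _ _ (Submodule.subset_span hu))
  induction k with
  | zero => simp
  | succ k ih =>
    rw [pow_succ', Module.End.mul_apply, Module.End.mul_apply]
    set y := ((refl F v * refl F w) ^ k) x
    have h := add_mem (add_mem (hrefl v (by simp) (refl F w y)) (hrefl w (by simp) y)) ih
    simpa only [sub_add_sub_cancel] using h

lemma form_refl_mul_refl_pow (hF : F.IsSymm) (hv : F v v = 1) (hw : F w w = 1) (k : ℕ) (x y : V) :
    F (((refl F v * refl F w) ^ k) x) (((refl F v * refl F w) ^ k) y) = F x y := by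
  induction k with
  | zero => simp
  | succ k ih => simp only [pow_succ', Module.End.mul_apply, form_refl_refl hF, hv, hw, ih]

-- The power fixes `v` and `w`, so by invariance it moves every vector by an element of their span
-- that is orthogonal to both, and on that span the form is nondegenerate.
theorem refl_mul_refl_pow_eq_one (hF : F.IsSymm) (hv : F v v = 1) (hw : F w w = 1) {m : ℕ}
    (hm : 2 ≤ m) (hvw : F v w = -cos (π / m)) : (refl F v * refl F w) ^ m = 1 := by
  have hwv : F w v = -cos (π / m) := by rw [← hvw, hF.eq]
  obtain ⟨hU₁, hU₀⟩ := eval_U_cos_pi_div_period hm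
  have hfix_v : ((refl F v * refl F w) ^ m) v = v := by
    rw [refl_mul_refl_pow_apply hv hw hvw hwv, hU₁, hU₀, one_smul, zero_smul, add_zero]
  have hfix_w : ((refl F v * refl F w) ^ m) w = w := by
    have hinv : (refl F v * refl F w) ^ m * (refl F w * refl F v) ^ m = 1 :=
      pow_mul_pow_eq_one m (by
        rw [mul_assoc, ← mul_assoc (refl F w), refl_mul_self hw, one_mul, refl_mul_self hv])
    have hfix : ((refl F w * refl F v) ^ m) w = w := by
      rw [refl_mul_refl_pow_apply hw hv hwv hvw, hU₁, hU₀, one_smul, zero_smul, add_zero]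
    simpa only [Module.End.mul_apply, hfix, Module.End.one_apply] using LinearMap.congr_fun hinv w
  ext x
  obtain ⟨a, b, hab⟩ := Submodule.mem_span_pair.1
    (refl_mul_refl_pow_sub_mem_span (F := F) (v := v) (w := w) m x)
  have horth : ∀ u, ((refl F v * refl F w) ^ m) u = u → F u (a • v + b • w) = 0 := by
    intro u hu
    conv_lhs => rw [hab, map_sub, ← hu, form_refl_mul_refl_pow hF hv hw, hu, sub_self]
  have horth_v := horth v hfix_v
  have horth_w := horth w hfix_w
  simp only [map_add, map_smul, smul_eq_mul, hv, hw, hvw, hwv] at horth_v horth_w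
  have hsin : sin (π / m) ^ 2 ≠ 0 := pow_ne_zero 2 (sin_pi_div_pos hm).ne'
  have ha : a = 0 := mul_left_cancel₀ hsin (by
    rw [sin_sq]; linear_combination horth_v + cos (π / m) * horth_w)
  have hb : b = 0 := mul_left_cancel₀ hsin (by
    rw [sin_sq]; linear_combination horth_w + cos (π / m) * horth_v)
  rw [ha, hb, zero_smul, zero_smul, add_zero] at hab
  exact sub_eq_zero.1 hab.symm

end Reflection

/-! ### The geometric representation -/

section AlternatingWord

variable (cs : CoxeterSystem M W)

open CoxeterSystem

lemma exists_eq_mul_alternatingWord {w : W} {i : B} (j : B) (hi : ¬ cs.IsRightDescent w i) :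
    ∃ v k, w = v * cs.wordProd (alternatingWord i j k) ∧ cs.length v + k = cs.length w ∧
      ¬ cs.IsRightDescent v i ∧ ¬ cs.IsRightDescent v j := by
  induction hn : cs.length w using Nat.strong_induction_on generalizing w i j with
  | _ n ih =>
  subst hn
  by_cases hj : cs.IsRightDescent w j
  · obtain ⟨v, k, hw, hlen, hvj, hvi⟩ :=
      ih _ hj i (cs.isRightDescent_iff_not_isRightDescent_mul.1 hj) rfl
    rw [cs.isRightDescent_iff] at hj
    refine ⟨v, k + 1, ?_, by omega, hvi, hvj⟩
    rw [alternatingWord_succ, cs.wordProd_concat, ← mul_assoc, ← hw,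
      cs.simple_mul_simple_cancel_right]
  · exact ⟨w, 0, by simp [alternatingWord], rfl, hi, hj⟩

lemma succ_le_of_not_isRightDescent_mul_alternatingWord {v : W} {i j : B} {k : ℕ}
    (hlen : cs.length v + k = cs.length (v * cs.wordProd (alternatingWord i j k)))
    (hi : ¬ cs.IsRightDescent (v * cs.wordProd (alternatingWord i j k)) i) :
    M i j = 0 ∨ k + 1 ≤ M i j := by
  rw [cs.not_isRightDescent_iff, mul_assoc, ← cs.wordProd_concat, ← alternatingWord_succ] at hi
  have hred : cs.IsReduced (alternatingWord j i (k + 1)) := by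
    have h₁ := cs.length_mul_le v (cs.wordProd (alternatingWord j i (k + 1)))
    have h₂ := cs.length_wordProd_le (alternatingWord j i (k + 1))
    rw [length_alternatingWord] at h₂
    rw [CoxeterSystem.IsReduced, length_alternatingWord]
    omega
  by_contra! h
  rw [M.symmetric] at h
  exact cs.not_isReduced_alternatingWord j i h.1 h.2 hred

end AlternatingWord

section GeometricRepresentation

variable [DecidableEq B]

/-- The simple root `αᵢ`. -/
def sroot (i : B) : B → ℝ := Pi.single i 1

lemma sroot_nonneg (i : B) : 0 ≤ sroot i := Pi.single_nonneg.2 zero_le_one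

lemma sroot_ne_zero (i : B) : sroot i ≠ 0 := by
  simp [sroot]

variable [Fintype B]

/-- The Tits form `⟨αᵢ, αⱼ⟩ = -cos (π / mᵢⱼ)` on `B → ℝ`. Since `π / 0 = 0` by convention, the entry
`mᵢⱼ = 0` (which encodes `∞`) gives the usual value `-1`. -/
noncomputable def form (M : CoxeterMatrix B) : LinearMap.BilinForm ℝ (B → ℝ) :=
  Matrix.toBilin' (Matrix.of fun i j => -cos (π / M i j))

lemma form_sroot (i j : B) : form M (sroot i) (sroot j) = -cos (π / M i j) := by
  simp [form, sroot, Matrix.toBilin'_single]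

lemma form_sroot_self (i : B) : form M (sroot i) (sroot i) = 1 := by
  simp [form_sroot]

lemma form_isSymm (M : CoxeterMatrix B) : (form M).IsSymm :=
  Matrix.isSymm_toBilin'_iff_isSymm.2 <| Matrix.IsSymm.ext fun i j => by
    simp only [Matrix.of_apply, M.symmetric i j]

lemma srefl_isLiftable (M : CoxeterMatrix B) : M.IsLiftable fun i => refl (form M) (sroot i) := by
  intro i j
  obtain rfl | hij := eq_or_ne i j
  · rw [M.diagonal, pow_one, refl_mul_self (form_sroot_self i)]
  obtain h0 | hpos := Nat.eq_zero_or_pos (M i j)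
  · rw [h0, pow_zero]
  have hm : 2 ≤ M i j := by have := M.off_diagonal i j hij; omega
  exact refl_mul_refl_pow_eq_one (form_isSymm M) (form_sroot_self i) (form_sroot_self j) hm
    (form_sroot i j)

/-- The geometric representation of `W` on `B → ℝ`. -/
noncomputable def rep (cs : CoxeterSystem M W) : W →* Module.End ℝ (B → ℝ) :=
  cs.lift ⟨fun i => refl (form M) (sroot i), srefl_isLiftable M⟩

variable (cs : CoxeterSystem M W)

lemma rep_simple (i : B) : rep cs (cs.simple i) = refl (form M) (sroot i) :=
  cs.lift_apply_simple _ i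

lemma rep_mul_apply (u v : W) (x : B → ℝ) : rep cs (u * v) x = rep cs u (rep cs v x) := by
  rw [map_mul, Module.End.mul_apply]

lemma rep_inv_rep (u : W) (x : B → ℝ) : rep cs u⁻¹ (rep cs u x) = x := by
  rw [← rep_mul_apply, inv_mul_cancel, map_one, Module.End.one_apply]

lemma form_rep (w : W) (x y : B → ℝ) : form M (rep cs w x) (rep cs w y) = form M x y := by
  induction w using cs.simple_induction_left generalizing x y with
  | one => simp
  | mul_simple_left w i ih =>
    rw [rep_mul_apply, rep_mul_apply, rep_simple,
      form_refl_refl (form_isSymm M) (form_sroot_self i), ih]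

lemma rep_mul_simple_sroot (w : W) (i : B) :
    rep cs (w * cs.simple i) (sroot i) = -rep cs w (sroot i) := by
  rw [rep_mul_apply, rep_simple, refl_apply_self (form_sroot_self i), map_neg]

lemma exists_rep_alternatingWord_sroot {i j : B} (hij : i ≠ j) {k : ℕ}
    (hk : M i j = 0 ∨ k + 1 ≤ M i j) :
    ∃ a b : ℝ, 0 ≤ a ∧ 0 ≤ b ∧
      rep cs (cs.wordProd (CoxeterSystem.alternatingWord i j k)) (sroot i) =
        a • sroot i + b • sroot j := by
  have hU : ∀ n : ℤ, -1 ≤ n → n ≤ k → 0 ≤ (U ℝ n).eval (cos (π / M i j)) := fun n hn hnk =>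
    eval_U_cos_pi_div_nonneg (M.off_diagonal i j hij) hn (by omega)
  have hform : form M (sroot j) (sroot i) = -cos (π / M i j) := by rw [form_sroot, M.symmetric]
  rw [cs.prod_alternatingWord_eq_mul_pow, map_mul, map_pow, map_mul, rep_simple, rep_simple,
    Module.End.mul_apply, refl_mul_refl_pow_apply (form_sroot_self i) (form_sroot_self j)
      (form_sroot i j) hform]
  obtain ⟨l, rfl | rfl⟩ := Nat.even_or_odd' k
  · refine ⟨_, _, hU (2 * l) (by omega) (by omega), hU (2 * l - 1) (by omega) (by omega), ?_⟩
    simp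
  · refine ⟨_, _, hU (2 * l) (by omega) (by omega), hU (2 * l + 1) (by omega) (by omega), ?_⟩
    rw [if_neg (by simp), rep_simple, show (2 * l + 1) / 2 = l by omega,
      refl_apply_eval_U (form_sroot_self j) hform]

theorem rep_sroot_nonneg {w : W} {i : B} (hi : ¬ cs.IsRightDescent w i) :
    0 ≤ rep cs w (sroot i) := by
  induction hn : cs.length w using Nat.strong_induction_on generalizing w i with
  | _ n ih =>
  subst hn
  obtain rfl | hw := eq_or_ne w 1
  · simpa using sroot_nonneg i
  obtain ⟨j, hj⟩ := cs.exists_rightDescent_of_ne_one hw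
  have hij : i ≠ j := by rintro rfl; exact hi hj
  obtain ⟨v, k, rfl, hlen, hvi, hvj⟩ := exists_eq_mul_alternatingWord cs j hi
  have hk : k ≠ 0 := by
    rintro rfl
    simp only [CoxeterSystem.alternatingWord, cs.wordProd_nil, mul_one] at hj
    exact hvj hj
  obtain ⟨a, b, ha, hb, hab⟩ := exists_rep_alternatingWord_sroot cs hij
    (succ_le_of_not_isRightDescent_mul_alternatingWord cs hlen hi)
  rw [rep_mul_apply, hab, map_add, map_smul, map_smul]
  exact add_nonneg (smul_nonneg ha (ih _ (by omega) hvi rfl))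
    (smul_nonneg hb (ih _ (by omega) hvj rfl))

/-- The roots are the images of the simple roots under `W`. -/
def IsRoot (v : B → ℝ) : Prop := ∃ w i, v = rep cs w (sroot i)

variable {cs}

lemma isRoot_sroot (i : B) : IsRoot cs (sroot i) := ⟨1, i, by simp⟩

lemma IsRoot.rep_apply {v : B → ℝ} (hv : IsRoot cs v) (w : W) : IsRoot cs (rep cs w v) := by
  obtain ⟨u, i, rfl⟩ := hv
  exact ⟨w * u, i, by rw [rep_mul_apply]⟩

lemma IsRoot.form_self {v : B → ℝ} (hv : IsRoot cs v) : form M v v = 1 := by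
  obtain ⟨u, i, rfl⟩ := hv
  rw [form_rep, form_sroot_self]

lemma IsRoot.neg {v : B → ℝ} (hv : IsRoot cs v) : IsRoot cs (-v) := by
  obtain ⟨u, i, rfl⟩ := hv
  exact ⟨u * cs.simple i, i, (rep_mul_simple_sroot cs u i).symm⟩

lemma IsRoot.ne_zero {v : B → ℝ} (hv : IsRoot cs v) : v ≠ 0 := by
  rintro rfl
  simpa using hv.form_self

lemma rep_sroot_nonpos {w : W} {i : B} (hi : cs.IsRightDescent w i) :
    rep cs w (sroot i) ≤ 0 := by
  have h := rep_sroot_nonneg cs (cs.isRightDescent_iff_not_isRightDescent_mul.1 hi)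
  rwa [rep_mul_simple_sroot, neg_nonneg] at h

lemma IsRoot.nonneg_or_nonpos {v : B → ℝ} (hv : IsRoot cs v) : 0 ≤ v ∨ v ≤ 0 := by
  obtain ⟨u, i, rfl⟩ := hv
  by_cases hi : cs.IsRightDescent u i
  exacts [.inr (rep_sroot_nonpos hi), .inl (rep_sroot_nonneg cs hi)]

lemma rep_conj_simple (u : W) (i : B) :
    rep cs (u * cs.simple i * u⁻¹) = refl (form M) (rep cs u (sroot i)) := by
  rw [map_mul, map_mul, rep_simple, ← refl_map_mul (form_rep cs u), mul_assoc, ← map_mul,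
    mul_inv_cancel, map_one, mul_one]

lemma IsRoot.exists_isReflection {v : B → ℝ} (hv : IsRoot cs v) :
    ∃ t, cs.IsReflection t ∧ rep cs t = refl (form M) v := by
  obtain ⟨u, i, rfl⟩ := hv
  exact ⟨_, ⟨u, i, rfl⟩, rep_conj_simple u i⟩

lemma exists_isRoot_of_isReflection {t : W} (ht : cs.IsReflection t) :
    ∃ v, IsRoot cs v ∧ rep cs t = refl (form M) v := by
  obtain ⟨u, i, rfl⟩ := ht
  exact ⟨_, ⟨u, i, rfl⟩, rep_conj_simple u i⟩

lemma finite_setOf_isRoot [Finite W] : {v | IsRoot cs v}.Finite :=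
  (Set.finite_range fun p : W × B => rep cs p.1 (sroot p.2)).subset
    fun _ ⟨w, i, hv⟩ => ⟨(w, i), hv.symm⟩

lemma eq_one_of_rep_sroot_nonneg {w : W} (h : ∀ i, 0 ≤ rep cs w (sroot i)) :
    w = 1 := by
  by_contra hw
  obtain ⟨j, hj⟩ := cs.exists_rightDescent_of_ne_one hw
  exact ((isRoot_sroot j).rep_apply w).ne_zero (le_antisymm (rep_sroot_nonpos hj) (h j))

end GeometricRepresentation

section PositiveDefinite

lemma exists_invariant_bilinForm {G V : Type*} [Group G] [Finite G] [AddCommGroup V] [Module ℝ V]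
    (ρ : G →* Module.End ℝ V) {F : LinearMap.BilinForm ℝ V} (hF : F.IsSymm)
    (hpos : ∀ x ≠ 0, 0 < F x x) :
    ∃ Q : LinearMap.BilinForm ℝ V, Q.IsSymm ∧ (∀ x ≠ 0, 0 < Q x x) ∧
      ∀ g x y, Q (ρ g x) (ρ g y) = Q x y := by
  have := Fintype.ofFinite G
  set Q : LinearMap.BilinForm ℝ V := ∑ g, F.comp (ρ g) (ρ g)
  have hQ : ∀ x y, Q x y = ∑ g, F (ρ g x) (ρ g y) := fun x y => by
    simp only [Q, LinearMap.sum_apply, LinearMap.BilinForm.comp_apply]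
  have hnonneg : ∀ x, 0 ≤ F x x := fun x => by
    obtain rfl | hx := eq_or_ne x 0
    exacts [by simp, (hpos x hx).le]
  refine ⟨Q, ⟨fun x y => ?_⟩, fun x hx => ?_, fun h x y => ?_⟩
  · simp only [hQ]
    exact Finset.sum_congr rfl fun g _ => hF.eq _ _
  · rw [hQ]
    exact Finset.sum_pos' (fun g _ => hnonneg _)
      ⟨1, Finset.mem_univ _, by simpa only [map_one, Module.End.one_apply] using hpos x hx⟩
  · simp only [hQ, ← Module.End.mul_apply, ← map_mul]
    exact Fintype.sum_equiv (Equiv.mulRight h) _ _ fun _ => rfl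

variable [Fintype B] [DecidableEq B]

lemma form_sroot_mul_of_invariant (cs : CoxeterSystem M W) {Q : LinearMap.BilinForm ℝ (B → ℝ)}
    (hinv : ∀ w x y, Q (rep cs w x) (rep cs w y) = Q x y) (i : B) (y : B → ℝ) :
    form M (sroot i) y * Q (sroot i) (sroot i) = Q (sroot i) y := by
  have h := hinv (cs.simple i) (sroot i) y
  rw [rep_simple, refl_apply_self (form_sroot_self i), refl_apply, map_neg, LinearMap.neg_apply,
    map_sub, map_smul, smul_eq_mul] at h
  linarith

-- Rescaling the simple roots to unit length turns an invariant inner product into the Tits form.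
lemma exists_form_eq_comp (cs : CoxeterSystem M W) {Q : LinearMap.BilinForm ℝ (B → ℝ)}
    (hsymm : Q.IsSymm) (hpos : ∀ x ≠ 0, 0 < Q x x)
    (hinv : ∀ w x y, Q (rep cs w x) (rep cs w y) = Q x y) :
    ∃ d : (B → ℝ) ≃ₗ[ℝ] (B → ℝ), form M = Q.comp d.toLinearMap d.toLinearMap := by
  set q : B → ℝ := fun i => Q (sroot i) (sroot i)
  have hq : ∀ i, 0 < q i := fun i => hpos _ (sroot_ne_zero i)
  have hform : ∀ i j, form M (sroot i) (sroot j) * q i = Q (sroot i) (sroot j) := fun i j =>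
    form_sroot_mul_of_invariant cs hinv i (sroot j)
  have hsqrt : ∀ i, √(q i) ≠ 0 := fun i => (Real.sqrt_pos.2 (hq i)).ne'
  set d : (B → ℝ) ≃ₗ[ℝ] (B → ℝ) := LinearEquiv.piCongrRight fun i =>
    LinearEquiv.smulOfNeZero ℝ ℝ (√(q i))⁻¹ (inv_ne_zero (hsqrt i))
  have hd : ∀ i, d (sroot i) = (√(q i))⁻¹ • sroot i := fun i => by
    ext k
    obtain rfl | hki := eq_or_ne k i
    · rfl
    · simp [d, sroot, hki]
  refine ⟨d, LinearMap.BilinForm.ext_basis (Pi.basisFun ℝ B) fun i j => ?_⟩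
  rw [Pi.basisFun_apply, Pi.basisFun_apply]
  change form M (sroot i) (sroot j) = Q (d (sroot i)) (d (sroot j))
  have hij : form M (sroot i) (sroot j) = 0 ∨ q i = q j := by
    have h := hform j i
    rw [(form_isSymm M).eq, hsymm.eq, ← hform i j] at h
    rcases eq_or_ne (form M (sroot i) (sroot j)) 0 with h0 | h0
    exacts [.inl h0, .inr (mul_left_cancel₀ h0 h.symm)]
  simp only [hd, map_smul, LinearMap.smul_apply, smul_eq_mul, ← hform]
  rcases hij with h0 | hqq
  · rw [h0]; ring
  · rw [← hqq]
    field_simp [hsqrt i]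
    rw [Real.sq_sqrt (hq i).le]

theorem form_self_pos [Finite W] (cs : CoxeterSystem M W) (x : B → ℝ) (hx : x ≠ 0) :
    0 < form M x x := by
  obtain ⟨Q, hsymm, hpos, hinv⟩ := exists_invariant_bilinForm (rep cs)
    (F := dotProductBilin ℝ ℝ) ⟨fun x y => dotProduct_comm x y⟩
    fun x hx => (dotProduct_self_star_nonneg x).lt_of_ne' (by simpa using hx)
  obtain ⟨d, hd⟩ := exists_form_eq_comp cs hsymm hpos hinv
  rw [hd]
  exact hpos _ (d.map_ne_zero_iff.2 hx)

end PositiveDefinite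

section FixedSpace

variable [Fintype B] [DecidableEq B] {cs : CoxeterSystem M W}

lemma rep_eq_one_iff {w : W} : rep cs w = 1 ↔ w = 1 := by
  refine ⟨fun h => eq_one_of_rep_sroot_nonneg (cs := cs) fun i => ?_, fun h => by rw [h, map_one]⟩
  rw [h, Module.End.one_apply]
  exact sroot_nonneg i

lemma eq_sum_sroot (y : B → ℝ) : y = ∑ i, y i • sroot i :=
  pi_eq_sum_univ' y

lemma form_apply_eq_sum (x y : B → ℝ) : form M x y = ∑ i, y i * form M x (sroot i) := by
  simp only [← smul_eq_mul, ← map_smul, ← map_sum, ← eq_sum_sroot]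

lemma exists_dominant [Finite W] (cs : CoxeterSystem M W) (x : B → ℝ) :
    ∃ w, ∀ i, 0 ≤ form M (rep cs w x) (sroot i) := by
  obtain ⟨w, hw⟩ := Finite.exists_max fun w : W => ∑ k, rep cs w x k
  refine ⟨w, fun i => ?_⟩
  have h := hw (cs.simple i * w)
  have hs : ∑ k, sroot i k = (1 : ℝ) := by simp [sroot]
  simp only [rep_mul_apply, rep_simple, refl_apply, Pi.sub_apply, Pi.smul_apply, smul_eq_mul,
    Finset.sum_sub_distrib, ← Finset.mul_sum, hs, (form_isSymm M).eq (sroot i)] at h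
  linarith

lemma eq_one_of_rep_eq_self {g : W} {x : B → ℝ} (hx : ∀ i, 0 < form M x (sroot i))
    (hg : rep cs g x = x) : g = 1 := by
  refine eq_one_of_rep_sroot_nonneg (cs := cs) fun i =>
    ((isRoot_sroot i).rep_apply g).nonneg_or_nonpos.resolve_right fun h => (hx i).not_ge ?_
  rw [← form_rep cs g, hg, form_apply_eq_sum]
  exact Finset.sum_nonpos fun k _ => mul_nonpos_of_nonpos_of_nonneg (h k) (hx k).le

-- Otherwise the fixed space contains a vector orthogonal to no root; its dominant representative
-- has positive products with all simple roots, hence trivial stabilizer.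
theorem exists_isRoot_orthogonal_fixed [Finite W] {g : W} (hg : g ≠ 1) :
    ∃ ρ, IsRoot cs ρ ∧ ∀ v, rep cs g v = v → form M ρ v = 0 := by
  by_contra! hcon
  have := (finite_setOf_isRoot (cs := cs)).to_subtype
  obtain ⟨x, hxg, hx⟩ := Module.Dual.exists_forall_mem_ne_zero_of_forall_exists
    (LinearMap.eqLocus (rep cs g) 1) (fun ρ : {v | IsRoot cs v} => form M ρ)
    fun ρ => hcon ρ ρ.2
  obtain ⟨w, hw⟩ := exists_dominant cs x
  have hpos : ∀ i, 0 < form M (rep cs w x) (sroot i) := fun i => by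
    refine (hw i).lt_of_ne' ?_
    rw [← form_rep cs w⁻¹, rep_inv_rep, (form_isSymm M).eq]
    exact hx ⟨_, (isRoot_sroot i).rep_apply w⁻¹⟩
  refine hg (conj_eq_one_iff.1 (eq_one_of_rep_eq_self (cs := cs) (g := w * g * w⁻¹) hpos ?_))
  rw [rep_mul_apply, rep_inv_rep, rep_mul_apply]
  exact congrArg _ hxg

end FixedSpace

/-! ### Noncrossing subspaces -/

section NoncrossingSubspace

variable {V : Type*} [AddCommGroup V] [Module ℝ V] {F E : LinearMap.BilinForm ℝ V}
  {g : Module.End ℝ V} {X : Submodule ℝ V} {ρ : V}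

lemma inf_ker_sup_span_singleton {φ : Module.Dual ℝ V} (hρ : ρ ∈ X) (hφ : φ ρ ≠ 0) :
    X ⊓ LinearMap.ker φ ⊔ ℝ ∙ ρ = X := by
  rw [inf_sup_assoc_of_le _ ((Submodule.span_singleton_le_iff_mem _ _).2 hρ), sup_comm,
    LinearMap.span_singleton_sup_ker_eq_top φ hφ, inf_top_eq]

lemma finrank_inf_ker_add_one [FiniteDimensional ℝ V] {φ : Module.Dual ℝ V} (hρ : ρ ∈ X)
    (hφ : φ ρ ≠ 0) :
    Module.finrank ℝ (X ⊓ LinearMap.ker φ : Submodule ℝ V) + 1 = Module.finrank ℝ X := by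
  rw [← Submodule.map_comap_subtype, Submodule.finrank_map_subtype_eq]
  exact Module.Dual.finrank_ker_add_one_of_ne_zero (f := φ ∘ₗ X.subtype)
    fun h => hφ (LinearMap.congr_fun h ⟨ρ, hρ⟩)

/-- `E` is an Euler form for `F`: its symmetrization is `2 F`. -/
def IsEuler (F E : LinearMap.BilinForm ℝ V) : Prop :=
  ∀ x y, E x y + E y x = 2 * F x y

/-- `X` is the noncrossing subspace of `g` with respect to the Euler form `E` for `F`. For the form
`E (x, y) = 2 F ((1 - γ)⁻¹ x, y)` attached to a Coxeter element `γ` these are the spaces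
`im (1 - g)` with `g ≤ γ`; inverting `1 - γ` is avoided by asking instead for
`E ((1 - g) v, m) = 2 F (v, m)` on `X`. -/
structure IsNC (F E : LinearMap.BilinForm ℝ V) (g : Module.End ℝ V) (X : Submodule ℝ V) :
    Prop where
  sub_mem : ∀ v, v - g v ∈ X
  form_sub : ∀ v, ∀ m ∈ X, E (v - g v) m = 2 * F v m

lemma IsEuler.apply_self (hE : IsEuler F E) (x : V) : E x x = F x x := by
  linarith [hE x x]

lemma IsEuler.isSymm (hE : IsEuler F E) : F.IsSymm :=
  ⟨fun x y => show F x y = F y x by linarith [hE x y, hE y x]⟩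

lemma IsEuler.apply_self_ne_zero (hE : IsEuler F E) (hρ : F ρ ρ = 1) : E ρ ρ ≠ 0 := by
  rw [hE.apply_self, hρ]
  exact one_ne_zero

lemma IsEuler.comp_refl (hE : IsEuler F E) (hρ : F ρ ρ = 1) :
    IsEuler F (E.comp (refl F ρ) (refl F ρ)) := fun x y => by
  rw [LinearMap.BilinForm.comp_apply, LinearMap.BilinForm.comp_apply, hE,
    form_refl_refl hE.isSymm hρ]

lemma isNC_one_bot (F E : LinearMap.BilinForm ℝ V) : IsNC F E 1 ⊥ where
  sub_mem v := by simp
  form_sub v m hm := by simp [(Submodule.mem_bot ℝ).1 hm]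

lemma IsNC.apply_eq_iff (hE : IsEuler F E) (hF : ∀ x ≠ 0, 0 < F x x) (h : IsNC F E g X) {v : V} :
    g v = v ↔ ∀ m ∈ X, F v m = 0 := by
  refine ⟨fun hv m hm => ?_, fun hv => ?_⟩
  · have := h.form_sub v m hm
    rw [hv, sub_self, map_zero, LinearMap.zero_apply] at this
    linarith
  · by_contra hne
    have hpos := hF _ (sub_ne_zero.2 (Ne.symm hne))
    rw [← hE.apply_self, h.form_sub v _ (h.sub_mem v), hv _ (h.sub_mem v)] at hpos
    simp at hpos

lemma IsNC.eq_one_of_bot (hE : IsEuler F E) (hF : ∀ x ≠ 0, 0 < F x x) (h : IsNC F E g ⊥) :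
    g = 1 :=
  LinearMap.ext fun v => (h.apply_eq_iff hE hF).2 fun m hm => by simp [(Submodule.mem_bot ℝ).1 hm]

lemma IsNC.eq_bot_of_one (hF : ∀ x ≠ 0, 0 < F x x) (h : IsNC F E 1 X) : X = ⊥ := by
  refine (Submodule.eq_bot_iff _).2 fun m hm => ?_
  by_contra hne
  have := h.form_sub m m hm
  rw [Module.End.one_apply, sub_self, map_zero, LinearMap.zero_apply] at this
  linarith [hF m hne]

lemma IsNC.eq_range [FiniteDimensional ℝ V] (hF : ∀ x ≠ 0, 0 < F x x) (h : IsNC F E g X) :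
    X = LinearMap.range (1 - g) := by
  have hinj : Function.Injective ((1 - g).restrict (p := X) (q := X) fun v _ => h.sub_mem v) := by
    refine (injective_iff_map_eq_zero _).2 fun v hv => Subtype.ext ?_
    by_contra hne
    have hEv := h.form_sub v v v.2
    rw [show (v : V) - g v = 0 from congrArg Subtype.val hv, map_zero,
      LinearMap.zero_apply] at hEv
    linarith [hF v hne]
  refine le_antisymm (fun m hm => ?_) ?_
  · obtain ⟨v, hv⟩ := LinearMap.surjective_of_injective hinj ⟨m, hm⟩
    exact ⟨v, congrArg Subtype.val hv⟩
  · rintro _ ⟨v, rfl⟩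
    exact h.sub_mem v

lemma sub_refl_mul_apply (v : V) :
    v - (refl F ρ * g) v = (v - g v) + (2 * F ρ (g v)) • ρ := by
  rw [Module.End.mul_apply, refl_apply]
  abel

lemma range_one_sub_refl_mul_le (F : LinearMap.BilinForm ℝ V) (ρ : V) (g : Module.End ℝ V) :
    LinearMap.range (1 - refl F ρ * g) ≤ LinearMap.range (1 - g) ⊔ ℝ ∙ ρ := by
  rintro _ ⟨v, rfl⟩
  rw [LinearMap.sub_apply, Module.End.one_apply, sub_refl_mul_apply]
  exact Submodule.add_mem_sup ⟨v, rfl⟩ (Submodule.mem_span_singleton.2 ⟨_, rfl⟩)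

lemma finrank_sup_span_singleton_le [FiniteDimensional ℝ V] (X : Submodule ℝ V) (ρ : V) :
    Module.finrank ℝ (X ⊔ ℝ ∙ ρ : Submodule ℝ V) ≤ Module.finrank ℝ X + 1 :=
  (Submodule.finrank_add_le_finrank_add_finrank _ _).trans
    (Nat.add_le_add_left ((finrank_span_le_card ({ρ} : Set V)).trans_eq (by simp)) _)

lemma finrank_range_one_sub_refl_mul_le [FiniteDimensional ℝ V] (F : LinearMap.BilinForm ℝ V)
    (ρ : V) (g : Module.End ℝ V) :
    Module.finrank ℝ (LinearMap.range (1 - refl F ρ * g)) ≤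
      Module.finrank ℝ (LinearMap.range (1 - g)) + 1 :=
  (Submodule.finrank_mono (range_one_sub_refl_mul_le F ρ g)).trans
    (finrank_sup_span_singleton_le _ ρ)

lemma IsNC.refl_mul_inf_ker (hE : IsEuler F E) (h : IsNC F E g X) (hρX : ρ ∈ X)
    (hρ : F ρ ρ = 1) : IsNC F E (refl F ρ * g) (X ⊓ LinearMap.ker (E ρ)) := by
  refine ⟨fun v => ?_, fun v m ⟨hm, hm'⟩ => ?_⟩
  · rw [sub_refl_mul_apply]
    refine ⟨X.add_mem (h.sub_mem v) (X.smul_mem _ hρX), ?_⟩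
    have hsum := hE (v - g v) ρ
    rw [h.form_sub v ρ hρX, map_sub F, LinearMap.sub_apply, hE.isSymm.eq (g v)] at hsum
    rw [SetLike.mem_coe, LinearMap.mem_ker, map_add, map_smul, smul_eq_mul, hE.apply_self, hρ]
    linarith
  · rw [sub_refl_mul_apply, map_add, map_smul, LinearMap.add_apply, LinearMap.smul_apply,
      show E ρ m = 0 from hm', smul_zero, add_zero, h.form_sub v m hm]

lemma IsNC.refl_mul_sup_span (hE : IsEuler F E) (h : IsNC F E g X) (hX : X ≤ LinearMap.ker (E ρ))
    (hρ : F ρ ρ = 1) : IsNC F E (refl F ρ * g) (X ⊔ ℝ ∙ ρ) := by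
  refine ⟨fun v => ?_, fun v x hx => ?_⟩
  · rw [sub_refl_mul_apply]
    exact Submodule.add_mem_sup (h.sub_mem v) (Submodule.mem_span_singleton.2 ⟨_, rfl⟩)
  · obtain ⟨m, hm, _, hc, rfl⟩ := Submodule.mem_sup.1 hx
    obtain ⟨c, rfl⟩ := Submodule.mem_span_singleton.1 hc
    have hsum := hE (v - g v) ρ
    rw [show E ρ (v - g v) = 0 from hX (h.sub_mem v), map_sub F, LinearMap.sub_apply,
      hE.isSymm.eq (g v)] at hsum
    simp only [sub_refl_mul_apply, map_add, map_smul, LinearMap.add_apply, LinearMap.smul_apply,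
      smul_eq_mul, h.form_sub v m hm, show E ρ m = 0 from hX hm, hE.apply_self, hρ]
    linear_combination c * hsum

lemma IsNC.refl_conj (hE : IsEuler F E) (h : IsNC F E g X) (hρ : F ρ ρ = 1) :
    IsNC F (E.comp (refl F ρ) (refl F ρ)) (refl F ρ * g * refl F ρ) (X.comap (refl F ρ)) := by
  have hconj : ∀ v, refl F ρ (v - (refl F ρ * g * refl F ρ) v) = refl F ρ v - g (refl F ρ v) :=
    fun v => by rw [map_sub, Module.End.mul_apply, Module.End.mul_apply, refl_refl hρ]
  refine ⟨fun v => ?_, fun v m hm => ?_⟩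
  · rw [Submodule.mem_comap, hconj]
    exact h.sub_mem _
  · rw [LinearMap.BilinForm.comp_apply, hconj, h.form_sub _ _ hm, form_refl_refl hE.isSymm hρ]

end NoncrossingSubspace

section NoncrossingRoots

variable [Fintype B] [DecidableEq B] {cs : CoxeterSystem M W} [Finite W]
  {E : LinearMap.BilinForm ℝ (B → ℝ)} {g : W} {X : Submodule ℝ (B → ℝ)}

lemma form_nondegenerate (cs : CoxeterSystem M W) : (form M).Nondegenerate :=
  ⟨fun x hx => by_contra fun h => (form_self_pos cs x h).ne' (hx x),
    fun x hx => by_contra fun h => (form_self_pos cs x h).ne' (hx x)⟩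

lemma IsNC.exists_isRoot (hE : IsEuler (form M) E) (h : IsNC (form M) E (rep cs g) X)
    (hX : X ≠ ⊥) : ∃ ρ ∈ X, IsRoot cs ρ := by
  obtain ⟨ρ, hρ, horth⟩ := exists_isRoot_orthogonal_fixed (cs := cs) (g := g) fun hg =>
    hX (IsNC.eq_bot_of_one (form_self_pos cs) (by rwa [hg, map_one] at h))
  refine ⟨ρ, ?_, hρ⟩
  rw [← LinearMap.BilinForm.orthogonal_orthogonal (form_nondegenerate cs) hE.isSymm.isRefl X]
  refine LinearMap.BilinForm.mem_orthogonal_iff.2 fun v hv => hE.isSymm.isRefl _ _ <|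
    horth v ((h.apply_eq_iff hE (form_self_pos cs)).2 fun m hm => ?_)
  exact hE.isSymm.isRefl _ _ (LinearMap.BilinForm.mem_orthogonal_iff.1 hv m hm)

/-- The positive roots lying in `X`. -/
def posRoots (cs : CoxeterSystem M W) (X : Submodule ℝ (B → ℝ)) : Set (B → ℝ) :=
  {ρ | IsRoot cs ρ ∧ 0 ≤ ρ ∧ ρ ∈ X}

omit [Finite W] in
lemma posRoots_mono {Y : Submodule ℝ (B → ℝ)} (h : X ≤ Y) : posRoots cs X ⊆ posRoots cs Y :=
  fun _ hρ => ⟨hρ.1, hρ.2.1, h hρ.2.2⟩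

lemma IsNC.posRoots_nonempty (hE : IsEuler (form M) E) (h : IsNC (form M) E (rep cs g) X)
    (hX : X ≠ ⊥) : (posRoots cs X).Nonempty := by
  obtain ⟨ρ, hρX, hρ⟩ := h.exists_isRoot hE hX
  rcases hρ.nonneg_or_nonpos with h0 | h0
  exacts [⟨ρ, hρ, h0, hρX⟩, ⟨-ρ, hρ.neg, neg_nonneg.2 h0, X.neg_mem hρX⟩]

lemma IsNC.le_span_posRoots (hE : IsEuler (form M) E) (h : IsNC (form M) E (rep cs g) X) :
    X ≤ Submodule.span ℝ (posRoots cs X) := by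
  induction hn : Module.finrank ℝ X generalizing g X with
  | zero => exact (Submodule.finrank_eq_zero.1 hn).trans_le bot_le
  | succ n ih =>
    obtain ⟨ρ, hρ⟩ := h.posRoots_nonempty hE (by rintro rfl; simp at hn)
    obtain ⟨t, -, ht⟩ := hρ.1.exists_isReflection
    have hEρ := hE.apply_self_ne_zero hρ.1.form_self
    have hcut := h.refl_mul_inf_ker hE hρ.2.2 hρ.1.form_self
    rw [← ht, ← map_mul] at hcut
    have hrank := finrank_inf_ker_add_one hρ.2.2 hEρ
    nth_rewrite 1 [← inf_ker_sup_span_singleton hρ.2.2 hEρ]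
    refine sup_le ((ih hcut (by omega)).trans (Submodule.span_mono (posRoots_mono inf_le_left))) ?_
    exact Submodule.span_mono (Set.singleton_subset_iff.2 hρ)

end NoncrossingRoots

/-! ### Cones of positive roots -/

section Cone

open PointedCone

lemma exists_subset_span_eq_irredundant {R V : Type*} [Semiring R] [AddCommMonoid V] [Module R V]
    {S : Set V} (hS : S.Finite) :
    ∃ D ⊆ S, Submodule.span R D = Submodule.span R S ∧
      ∀ d ∈ D, d ∉ Submodule.span R (D \ {d}) := by
  obtain ⟨D, -, hD⟩ := (hS.finite_subsets.subset
    fun _ h => h.1 : {D | D ⊆ S ∧ Submodule.span R D = Submodule.span R S}.Finite).exists_le_minimal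
      ⟨subset_rfl, rfl⟩
  refine ⟨D, hD.prop.1, hD.prop.2, fun d hd hmem => ?_⟩
  have hspan : Submodule.span R (D \ {d}) = Submodule.span R S := by
    rw [← hD.prop.2, ← Submodule.span_insert_eq_span hmem, Set.insert_sdiff_singleton,
      Set.insert_eq_of_mem hd]
  exact (hD.le_of_le ⟨Set.sdiff_subset.trans hD.prop.1, hspan⟩ Set.sdiff_subset hd).2 rfl

lemma mem_hull_sep_of_apply_eq_zero {V : Type*} [AddCommGroup V] [Module ℝ V] {D : Set V}
    {φ : Module.Dual ℝ V} (hφ : ∀ d ∈ D, 0 ≤ φ d) {x : V} (hx : x ∈ hull ℝ D) (h0 : φ x = 0) :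
    x ∈ hull ℝ {d ∈ D | φ d = 0} := by
  suffices 0 ≤ φ x ∧ (φ x = 0 → x ∈ hull ℝ {d ∈ D | φ d = 0}) from this.2 h0
  clear h0
  induction hx using Submodule.span_induction with
  | mem d hd => exact ⟨hφ d hd, fun h => subset_hull ⟨hd, h⟩⟩
  | zero => exact ⟨(map_zero φ).ge, fun _ => zero_mem _⟩
  | add x y _ _ hx hy =>
    rw [map_add]
    refine ⟨add_nonneg hx.1 hy.1, fun h => ?_⟩
    obtain ⟨hx0, hy0⟩ := (add_eq_zero_iff_of_nonneg hx.1 hy.1).1 h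
    exact add_mem (hx.2 hx0) (hy.2 hy0)
  | smul c x _ hx =>
    rw [Nonneg.mk_smul, map_smul, smul_eq_mul]
    refine ⟨mul_nonneg c.2 hx.1, fun h => ?_⟩
    rcases mul_eq_zero.1 h with hc | hx0
    · rw [hc, zero_smul]
      exact zero_mem _
    · exact Submodule.smul_mem _ c (hx.2 hx0)

-- Adding `c • v` for general `c > 0` avoids the subspaces not containing `v`, each of which meets
-- the ray in at most one point.
lemma exists_mem_hull_generic {V : Type*} [AddCommGroup V] [Module ℝ V] {S : Set V}
    (hS : S.Finite) {H : Set (Submodule ℝ V)} (hH : H.Finite) :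
    ∃ P ∈ hull ℝ S, ∀ U ∈ H, P ∈ U → S ⊆ U := by
  induction S, hS using Set.Finite.induction_on with
  | empty => exact ⟨0, zero_mem _, by simp⟩
  | @insert v S _ _ ih =>
    obtain ⟨P, hP, hgen⟩ := ih
    have hbad : (⋃ U ∈ {U ∈ H | v ∉ U}, {c : ℝ | P + c • v ∈ U}).Finite := by
      refine (hH.subset fun U hU => hU.1).biUnion fun U ⟨_, hvU⟩ => Set.Subsingleton.finite ?_
      intro c hc d hd
      by_contra hcd
      have hsub : (c - d) • v ∈ U := by
        simpa only [sub_smul, add_sub_add_left_eq_sub] using U.sub_mem hc hd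
      exact hvU ((U.smul_mem_iff (sub_ne_zero.2 hcd)).1 hsub)
    obtain ⟨c, hc, hcbad⟩ := (Set.Ioi_infinite (0 : ℝ)).exists_notMem_finite hbad
    refine ⟨P + c • v, add_mem (Submodule.span_mono (Set.subset_insert v S) hP)
      (smul_mem _ (le_of_lt hc) (subset_hull (Set.mem_insert v S))), fun U hU hPU => ?_⟩
    have hvU : v ∈ U := by_contra fun hvU => hcbad (Set.mem_biUnion (x := U) ⟨hU, hvU⟩ hPU)
    exact Set.insert_subset hvU (hgen U hU ((U.add_mem_iff_left (U.smul_mem c hvU)).1 hPU))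

lemma add_smul_ne_smul_of_notMem_hull {D : Set (B → ℝ)} {d d' x : B → ℝ} (hD : ∀ d ∈ D, 0 ≤ d)
    (hd : d ∈ D) (hirr : d ∉ hull ℝ (D \ {d})) (hd' : d' ∈ D \ {d}) (hd'0 : d' ≠ 0)
    (hx : x ∈ hull ℝ D) {c : ℝ} (hc : 0 < c) (k : ℝ) : x + c • d' ≠ k • d := by
  intro h
  rw [← Set.insert_sdiff_self_of_mem hd, Submodule.mem_span_insert] at hx
  obtain ⟨a, z, hz, rfl⟩ := hx
  have hnonneg : ∀ y ∈ hull ℝ (D \ {d}), 0 ≤ y := fun y hy => (mem_positive _ _).1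
    ((Submodule.span_le.2 fun d hd => hD d hd.1 : hull ℝ (D \ {d}) ≤ positive ℝ (B → ℝ)) hy)
  have hy : (k - a) • d = z + c • d' := by
    rw [sub_smul, ← h, Nonneg.mk_smul]
    abel
  have hpos : 0 < k - a := by
    by_contra! hneg
    refine (smul_pos hc ((hD d' hd'.1).lt_of_ne' hd'0)).not_ge ?_
    calc c • d' ≤ z + c • d' := le_add_of_nonneg_left (hnonneg z hz)
      _ = (k - a) • d := hy.symm
      _ ≤ 0 := smul_nonpos_of_nonpos_of_nonneg hneg (hD d hd)
  refine hirr ?_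
  have hmem := smul_mem (hull ℝ (D \ {d})) (inv_nonneg.2 hpos.le)
    (add_mem hz (smul_mem _ hc.le (subset_hull hd')))
  rwa [← hy, inv_smul_smul₀ hpos.ne'] at hmem

variable [Fintype B] [DecidableEq B] {cs : CoxeterSystem M W}
  {X Y : Submodule ℝ (B → ℝ)} {D : Set (B → ℝ)} {i : B} {ρ d P : B → ℝ}

/-- The convex cone spanned by the positive roots lying in `X`. -/
def cone (cs : CoxeterSystem M W) (X : Submodule ℝ (B → ℝ)) : PointedCone ℝ (B → ℝ) :=
  hull ℝ (posRoots cs X)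

lemma nonneg_of_mem_cone (hP : P ∈ cone cs X) : 0 ≤ P :=
  (mem_positive _ _).1
    ((Submodule.span_le.2 fun _ hρ => hρ.2.1 : cone cs X ≤ positive ℝ (B → ℝ)) hP)

lemma mem_of_mem_cone (hP : P ∈ cone cs X) : P ∈ X :=
  (Submodule.span_le.2 fun _ hρ => hρ.2.2 : cone cs X ≤ X.restrictScalars _) hP

lemma cone_mono (h : X ≤ Y) : cone cs X ≤ cone cs Y :=
  Submodule.span_mono (posRoots_mono h)

lemma IsRoot.eq_sroot (hρ : IsRoot cs ρ) (h : 0 ≤ ρ) (hi : ∀ k ≠ i, ρ k = 0) : ρ = sroot i := by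
  have hρi : ρ = ρ i • sroot i := by
    ext k
    obtain rfl | hk := eq_or_ne k i
    · simp [sroot]
    · simp [sroot, hk, hi k hk]
  have hnorm := hρ.form_self
  rw [hρi] at hnorm
  simp only [map_smul, LinearMap.smul_apply, form_sroot_self, smul_eq_mul, mul_one] at hnorm
  have hone : ρ i = 1 := by
    have := h i
    rw [Pi.zero_apply] at this
    nlinarith
  rw [hρi, hone, one_smul]

lemma IsRoot.refl_sroot_nonneg (hρ : IsRoot cs ρ) (h : 0 ≤ ρ) (hne : ρ ≠ sroot i) :
    0 ≤ refl (form M) (sroot i) ρ := by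
  rw [← rep_simple cs]
  refine (hρ.rep_apply _).nonneg_or_nonpos.resolve_right fun hneg => hne (hρ.eq_sroot h ?_)
  intro k hk
  have := hneg k
  rw [rep_simple, refl_apply] at this
  simp only [sroot, Pi.sub_apply, Pi.smul_apply, Pi.single_eq_of_ne hk, smul_zero, sub_zero] at this
  exact le_antisymm this (h k)

theorem exists_base [Finite W] (cs : CoxeterSystem M W) (X : Submodule ℝ (B → ℝ)) :
    ∃ D ⊆ posRoots cs X, hull ℝ D = cone cs X ∧
      D.Pairwise fun d d' => form M d d' ≤ 0 := by
  obtain ⟨D, hDX, hDspan, hirr⟩ := exists_subset_span_eq_irredundant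
    (R := {c : ℝ // 0 ≤ c}) (finite_setOf_isRoot.subset fun ρ hρ => hρ.1 : (posRoots cs X).Finite)
  refine ⟨D, hDX, hDspan, fun d hd d' hd' hne => not_lt.1 fun hpos => ?_⟩
  have hD : ∀ d ∈ D, 0 ≤ d := fun d hd => (hDX hd).2.1
  have hpos2 : 0 < 2 * form M d d' := by linarith
  obtain ⟨t, -, ht⟩ := (hDX hd).1.exists_isReflection
  have hε : IsRoot cs (d' - (2 * form M d d') • d) := by
    rw [← refl_apply, ← ht]
    exact (hDX hd').1.rep_apply t
  have hεX : d' - (2 * form M d d') • d ∈ X :=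
    X.sub_mem (hDX hd').2.2 (X.smul_mem _ (hDX hd).2.2)
  rcases hε.nonneg_or_nonpos with h | h
  · refine add_smul_ne_smul_of_notMem_hull hD hd' (hirr d' hd') ⟨hd, hne⟩ (hDX hd).1.ne_zero
      (hDspan.ge (subset_hull ⟨hε, h, hεX⟩)) hpos2 1 ?_
    rw [one_smul, sub_add_cancel]
  · refine add_smul_ne_smul_of_notMem_hull hD hd (hirr d hd) ⟨hd', hne.symm⟩ (hDX hd').1.ne_zero
      (hDspan.ge (subset_hull ⟨hε.neg, neg_nonneg.2 h, X.neg_mem hεX⟩)) one_pos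
      (2 * form M d d') ?_
    rw [one_smul, neg_sub, sub_add_cancel]

lemma linearIndepOn_of_pairwise_form_nonpos [Finite W] (cs : CoxeterSystem M W)
    (hD : ∀ d ∈ D, 0 < d) (hobt : D.Pairwise fun d d' => form M d d' ≤ 0) :
    LinearIndepOn ℝ id D := by
  refine LinearMap.BilinForm.linearIndependent_of_pairwise_le_zero (form M)
    (fun x hx => form_self_pos cs x hx) (∑ k, LinearMap.proj k) _ (fun d => ?_)
    fun d d' hne => hobt d.2 d'.2 (Subtype.coe_injective.ne hne)
  obtain ⟨hd, k, hk⟩ := Pi.lt_def.1 (hD d d.2)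
  rw [LinearMap.sum_apply]
  exact Finset.sum_pos' (fun k _ => hd k) ⟨k, Finset.mem_univ k, hk⟩

lemma sroot_mem_of_hull_eq_cone (hDX : D ⊆ posRoots cs X) (hD : hull ℝ D = cone cs X)
    (hi : sroot i ∈ X) : sroot i ∈ D := by
  by_contra hiD
  have hmem : sroot i ∈ hull ℝ D := hD.ge (subset_hull ⟨isRoot_sroot i, sroot_nonneg i, hi⟩)
  set φ : Module.Dual ℝ (B → ℝ) := ∑ k ∈ Finset.univ.erase i, LinearMap.proj k
  have hφ : ∀ x, φ x = ∑ k ∈ Finset.univ.erase i, x k := fun x => LinearMap.sum_apply _ _ _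
  have hface := mem_hull_sep_of_apply_eq_zero (φ := φ)
    (fun d hd => (hφ d).ge.trans' (Finset.sum_nonneg fun k _ => (hDX hd).2.1 k)) hmem
    ((hφ _).trans (Finset.sum_eq_zero fun k hk => Pi.single_eq_of_ne (Finset.ne_of_mem_erase hk) _))
  have hempty : {d ∈ D | φ d = 0} = ∅ := by
    refine Set.eq_empty_of_forall_notMem fun d ⟨hd, hd0⟩ => hiD ?_
    rw [hφ, Finset.sum_eq_zero_iff_of_nonneg fun k _ => (hDX hd).2.1 k] at hd0
    rwa [← (hDX hd).1.eq_sroot (hDX hd).2.1 fun k hk =>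
      hd0 k (Finset.mem_erase.2 ⟨hk, Finset.mem_univ k⟩)]
  rw [hempty, hull, Submodule.span_empty, Submodule.mem_bot] at hface
  exact sroot_ne_zero i hface

-- The base elements of `X` with vanishing `i`-th coordinate span the hyperplane section, so by
-- linear independence `αᵢ` is the only other one.
lemma apply_eq_zero_of_mem_base [Finite W] (hi : sroot i ∈ X)
    (hspan : X ⊓ LinearMap.ker (LinearMap.proj i) ≤
      Submodule.span ℝ (posRoots cs (X ⊓ LinearMap.ker (LinearMap.proj i))))
    (hDX : D ⊆ posRoots cs X) (hD : hull ℝ D = cone cs X)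
    (hobt : D.Pairwise fun d d' => form M d d' ≤ 0) (hd : d ∈ D) (hne : d ≠ sroot i) :
    d i = 0 := by
  by_contra hdi
  have hface : X ⊓ LinearMap.ker (LinearMap.proj i) ≤ Submodule.span ℝ (D \ {d}) := by
    refine hspan.trans (Submodule.span_le.2 fun ρ hρ => ?_)
    have hρD := mem_hull_sep_of_apply_eq_zero (φ := LinearMap.proj i)
      (fun d hd => (hDX hd).2.1 i) (hD.ge (subset_hull (posRoots_mono inf_le_left hρ))) hρ.2.2.2
    refine Submodule.span_mono ?_ (hull_le_span _ _ hρD)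
    rintro ε ⟨hε, hεi⟩
    exact ⟨hε, by rintro rfl; exact hdi hεi⟩
  have hsub : d - d i • sroot i ∈ Submodule.span ℝ (D \ {d}) :=
    hface ⟨X.sub_mem (hDX hd).2.2 (X.smul_mem _ hi), by simp [sroot]⟩
  have hsroot : sroot i ∈ Submodule.span ℝ (D \ {d}) :=
    Submodule.subset_span ⟨sroot_mem_of_hull_eq_cone hDX hD hi, hne.symm⟩
  have hmem := add_mem hsub (Submodule.smul_mem _ (d i) hsroot)
  rw [sub_add_cancel] at hmem
  have hindep := linearIndepOn_of_pairwise_form_nonpos cs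
    (fun d hd => (hDX hd).2.1.lt_of_ne' (hDX hd).1.ne_zero) hobt
  exact hindep.notMem_span hd (by rwa [Set.image_id])

theorem sub_smul_sroot_mem_cone [Finite W] (hi : sroot i ∈ X)
    (hspan : X ⊓ LinearMap.ker (LinearMap.proj i) ≤
      Submodule.span ℝ (posRoots cs (X ⊓ LinearMap.ker (LinearMap.proj i))))
    (hP : P ∈ cone cs X) :
    P - P i • sroot i ∈ cone cs (X ⊓ LinearMap.ker (LinearMap.proj i)) := by
  obtain ⟨D, hDX, hD, hobt⟩ := exists_base cs X
  let p : Module.End ℝ (B → ℝ) := 1 - (LinearMap.proj i).smulRight (sroot i)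
  suffices hull ℝ D ≤ (cone cs (X ⊓ LinearMap.ker (LinearMap.proj i))).comap p from
    this (hD.ge hP)
  refine Submodule.span_le.2 fun d hd => ?_
  change d - d i • sroot i ∈ cone cs (X ⊓ LinearMap.ker (LinearMap.proj i))
  obtain rfl | hne := eq_or_ne d (sroot i)
  · simp [sroot]
  · have hdi := apply_eq_zero_of_mem_base hi hspan hDX hD hobt hd hne
    rw [hdi, zero_smul, sub_zero]
    exact subset_hull ⟨(hDX hd).1, (hDX hd).2.1, (hDX hd).2.2, hdi⟩

end Cone

/-! ### Euler forms adapted to a word -/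

section Adapted

variable {L : List B} {i : B}

/-- The span of the simple roots indexed by `L`, as the space of vectors supported on `L`. -/
def coordSpace (L : List B) : Submodule ℝ (B → ℝ) :=
  Submodule.pi {k | k ∉ L} fun _ => ⊥

lemma mem_coordSpace {v : B → ℝ} : v ∈ coordSpace L ↔ ∀ k ∉ L, v k = 0 :=
  Iff.rfl

lemma coordSpace_nil : coordSpace ([] : List B) = ⊥ :=
  (Submodule.eq_bot_iff _).2 fun _ hv => funext fun k => hv k List.not_mem_nil

lemma mem_coordSpace_of_cons {v : B → ℝ} (hv : v ∈ coordSpace (i :: L)) (hi : v i = 0) :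
    v ∈ coordSpace L := by
  intro k hk
  obtain rfl | hki := eq_or_ne k i
  · exact hi
  · exact hv k (List.not_mem_cons_of_ne_of_not_mem hki hk)

variable [DecidableEq B]

lemma coordSpace_cons (i : B) (L : List B) :
    coordSpace (i :: L) = coordSpace L ⊔ ℝ ∙ sroot i := by
  refine le_antisymm (fun v hv => ?_) (sup_le ?_ ?_)
  · rw [← sub_add_cancel v (v i • sroot i)]
    refine Submodule.add_mem_sup (fun k hk => ?_) (Submodule.mem_span_singleton.2 ⟨_, rfl⟩)
    obtain rfl | hki := eq_or_ne k i
    · simp [sroot]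
    · have hvk : v k = 0 := hv k (List.not_mem_cons_of_ne_of_not_mem hki hk)
      simp [sroot, hki, hvk]
  · exact fun v hv k hk => hv k fun h => hk (List.mem_cons_of_mem _ h)
  · refine (Submodule.span_singleton_le_iff_mem _ _).2 fun k hk => ?_
    exact Pi.single_eq_of_ne (fun h : k = i => hk (h ▸ List.mem_cons_self)) _

variable [Fintype B] {cs : CoxeterSystem M W} {E : LinearMap.BilinForm ℝ (B → ℝ)}

/-- `E` is an Euler form that is upper triangular on the simple roots in the repetition-free word
`L`: the Euler form of the Coxeter element with word `L` of a parabolic subgroup. -/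
structure Adapted (M : CoxeterMatrix B) (E : LinearMap.BilinForm ℝ (B → ℝ)) (L : List B) :
    Prop where
  euler : IsEuler (form M) E
  nodup : L.Nodup
  pairwise : L.Pairwise fun j k => E (sroot j) (sroot k) = 0

lemma Adapted.tail (h : Adapted M E (i :: L)) : Adapted M E L :=
  ⟨h.euler, h.nodup.of_cons, h.pairwise.of_cons⟩

lemma Adapted.apply_head (h : Adapted M E (i :: L)) {v : B → ℝ} (hv : v ∈ coordSpace (i :: L)) :
    E (sroot i) v = v i := by
  have hterm : ∀ k ≠ i, E (sroot i) (v k • sroot k) = 0 := fun k hki => by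
    by_cases hk : k ∈ L
    · rw [map_smul, (List.pairwise_cons.1 h.pairwise).1 k hk, smul_zero]
    · rw [hv k (List.not_mem_cons_of_ne_of_not_mem hki hk), zero_smul, map_zero]
  calc E (sroot i) v = ∑ k, E (sroot i) (v k • sroot k) := by rw [← map_sum, ← eq_sum_sroot]
    _ = E (sroot i) (v i • sroot i) := Fintype.sum_eq_single i hterm
    _ = v i := by rw [map_smul, h.euler.apply_self, form_sroot_self, smul_eq_mul, mul_one]

lemma Adapted.isNC (h : Adapted M E L) :
    IsNC (form M) E (rep cs (cs.wordProd L)) (coordSpace L) := by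
  induction L with
  | nil =>
    rw [coordSpace_nil, cs.wordProd_nil, map_one]
    exact isNC_one_bot _ _
  | cons i L ih =>
    rw [coordSpace_cons, cs.wordProd_cons, map_mul, rep_simple]
    refine (ih h.tail).refl_mul_sup_span h.euler (fun v hv => ?_) (form_sroot_self i)
    have hvi : v ∈ coordSpace (i :: L) := (coordSpace_cons i L).ge (Submodule.mem_sup_left hv)
    rw [LinearMap.mem_ker, h.apply_head hvi, hv i h.nodup.notMem]

lemma Adapted.rotate (h : Adapted M E (i :: L)) :
    Adapted M (E.comp (refl (form M) (sroot i)) (refl (form M) (sroot i))) (L ++ [i]) := by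
  have hii : E (sroot i) (sroot i) = 1 := by rw [h.euler.apply_self, form_sroot_self]
  have hhead := (List.pairwise_cons.1 h.pairwise).1
  have hlast : ∀ j ∈ L, E (sroot j) (sroot i) = 2 * form M (sroot i) (sroot j) := fun j hj => by
    rw [← h.euler, hhead j hj, zero_add]
  refine ⟨h.euler.comp_refl (form_sroot_self i),
    (List.perm_append_singleton i L).nodup_iff.2 h.nodup, List.pairwise_append.2
      ⟨h.pairwise.of_cons.imp_of_mem fun {j k} hj hk hjk => ?_, List.pairwise_singleton _ _, ?_⟩⟩
  · simp only [LinearMap.BilinForm.comp_apply, refl_apply, map_sub, map_smul, LinearMap.sub_apply,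
      LinearMap.smul_apply, smul_eq_mul, hii, hhead k hk, hlast j hj, hjk]
    ring
  · simp only [List.mem_singleton, forall_eq]
    intro j hj
    simp only [LinearMap.BilinForm.comp_apply, refl_apply, map_sub, map_smul, LinearMap.sub_apply,
      LinearMap.smul_apply, smul_eq_mul, hii, hlast j hj, form_sroot_self]
    ring

lemma refl_sroot_mem_coordSpace {v : B → ℝ} (hv : v ∈ coordSpace (i :: L)) :
    refl (form M) (sroot i) v ∈ coordSpace (L ++ [i]) := by
  have hperm : coordSpace (L ++ [i]) = coordSpace (i :: L) := by
    ext v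
    simp only [mem_coordSpace, (List.perm_append_singleton i L).mem_iff]
  rw [hperm, refl_apply]
  refine Submodule.sub_mem _ hv (Submodule.smul_mem _ _ ?_)
  exact (coordSpace_cons i L).ge (Submodule.mem_sup_right (Submodule.mem_span_singleton_self _))

lemma Adapted.refl_sroot_head (h : Adapted M E (i :: L)) {v : B → ℝ}
    (hv : v ∈ coordSpace (i :: L)) : refl (form M) (sroot i) v i = -E v (sroot i) := by
  have hsum := h.euler (sroot i) v
  rw [h.apply_head hv] at hsum
  simp only [refl_apply, Pi.sub_apply, Pi.smul_apply, sroot, Pi.single_eq_same, smul_eq_mul,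
    mul_one] at hsum ⊢
  linarith

lemma Adapted.eq_zero_of_forall_nonneg [Finite W] {P : B → ℝ} (h : Adapted M E L)
    (hL : ∀ m : ℕ, rep cs ((cs.wordProd L)⁻¹ ^ m) P ∈ coordSpace L)
    (hP : ∀ m : ℕ, 0 ≤ rep cs ((cs.wordProd L)⁻¹ ^ m) P) : P = 0 := by
  set γ := cs.wordProd L
  let S := ∑ m ∈ Finset.range (orderOf γ⁻¹), rep cs (γ⁻¹ ^ m) P
  have hfix : rep cs γ⁻¹ S = S := by
    have hshift := (Finset.sum_range_succ' (fun m => rep cs (γ⁻¹ ^ m) P) (orderOf γ⁻¹)).symm.trans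
      (Finset.sum_range_succ _ _)
    rw [pow_orderOf_eq_one, pow_zero, add_left_inj] at hshift
    rw [map_sum]
    refine Eq.trans (Finset.sum_congr rfl fun m _ => ?_) hshift
    rw [pow_succ', rep_mul_apply]
  have hfix' : rep cs γ S = S := by
    nth_rewrite 1 [← hfix]
    rw [← rep_mul_apply, mul_inv_cancel, map_one, Module.End.one_apply]
  have hSL : S ∈ coordSpace L := Submodule.sum_mem _ fun m _ => hL m
  have hS : S = 0 := by_contra fun hne => (form_self_pos cs S hne).ne' <|
    (h.isNC.apply_eq_iff h.euler (form_self_pos cs)).1 hfix' S hSL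
  have hle : P ≤ S := by
    simpa only [pow_zero, map_one, Module.End.one_apply] using Finset.single_le_sum
      (f := fun m => rep cs (γ⁻¹ ^ m) P) (fun m _ => hP m) (Finset.mem_range.2 (orderOf_pos γ⁻¹))
  exact le_antisymm (hle.trans_eq hS) (by simpa using hP 0)

end Adapted

/-! ### Meets of noncrossing subspaces -/

section Meet

variable [Fintype B] [DecidableEq B] {cs : CoxeterSystem M W}
  {E : LinearMap.BilinForm ℝ (B → ℝ)} {X Z : Submodule ℝ (B → ℝ)} {L : List B} {i : B}
  {P : B → ℝ}

/-- `X` is a noncrossing subspace, supported on the letters of `L`, whose positive cone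
contains `P`. -/
structure InNCCone (cs : CoxeterSystem M W) (E : LinearMap.BilinForm ℝ (B → ℝ)) (L : List B)
    (P : B → ℝ) (X : Submodule ℝ (B → ℝ)) : Prop where
  isNC : ∃ g, IsNC (form M) E (rep cs g) X
  le : X ≤ coordSpace L
  mem_cone : P ∈ cone cs X

lemma InNCCone.mem_coordSpace (hX : InNCCone cs E L P X) : P ∈ coordSpace L :=
  hX.le (mem_of_mem_cone hX.mem_cone)

lemma Adapted.inf_ker_apply_sroot (h : Adapted M E (i :: L)) (hX : X ≤ coordSpace (i :: L)) :
    X ⊓ LinearMap.ker (E (sroot i)) = X ⊓ LinearMap.ker (LinearMap.proj i) := by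
  ext v
  refine and_congr_right fun hv => ?_
  rw [SetLike.mem_coe, SetLike.mem_coe, LinearMap.mem_ker, LinearMap.mem_ker,
    h.apply_head (hX hv), LinearMap.proj_apply]

lemma InNCCone.cut [Finite W] (hX : InNCCone cs E (i :: L) P X) (h : Adapted M E (i :: L))
    (hi : sroot i ∈ X) :
    InNCCone cs E L (P - P i • sroot i) (X ⊓ LinearMap.ker (E (sroot i))) := by
  obtain ⟨g, hg⟩ := hX.isNC
  have hcut := hg.refl_mul_inf_ker h.euler hi (form_sroot_self i)
  rw [← rep_simple cs, ← map_mul] at hcut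
  have hspan := hcut.le_span_posRoots h.euler
  refine ⟨⟨_, hcut⟩, ?_, ?_⟩
  · rw [h.inf_ker_apply_sroot hX.le]
    exact fun v hv => mem_coordSpace_of_cons (hX.le hv.1) hv.2
  · rw [h.inf_ker_apply_sroot hX.le] at hspan ⊢
    exact sub_smul_sroot_mem_cone hi hspan hX.mem_cone

lemma refl_sroot_mem_cone (hi : sroot i ∉ X) (hP : P ∈ cone cs X) :
    refl (form M) (sroot i) P ∈ cone cs (X.comap (refl (form M) (sroot i))) := by
  suffices cone cs X ≤ (cone cs (X.comap (refl (form M) (sroot i)))).comap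
    (refl (form M) (sroot i)) from this hP
  refine Submodule.span_le.2 fun ρ ⟨hρ, hρ0, hρX⟩ => PointedCone.subset_hull ⟨?_, ?_, ?_⟩
  · rw [← rep_simple cs]
    exact hρ.rep_apply _
  · exact hρ.refl_sroot_nonneg hρ0 fun h => hi (h ▸ hρX)
  · change refl _ _ (refl _ _ ρ) ∈ X
    rwa [refl_refl (form_sroot_self i)]

lemma InNCCone.apply_sroot_nonpos (hX : InNCCone cs E (i :: L) P X) (h : Adapted M E (i :: L))
    (hi : sroot i ∉ X) : E P (sroot i) ≤ 0 := by
  have := nonneg_of_mem_cone (refl_sroot_mem_cone hi hX.mem_cone) i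
  rwa [h.refl_sroot_head hX.mem_coordSpace, Pi.zero_apply, neg_nonneg] at this

lemma InNCCone.refl_sroot_mem_cone_of_nonpos [Finite W] (hX : InNCCone cs E (i :: L) P X)
    (h : Adapted M E (i :: L)) (hi : sroot i ∈ X) (hneg : E P (sroot i) ≤ 0) :
    refl (form M) (sroot i) P ∈ cone cs (X.comap (refl (form M) (sroot i))) := by
  have hcomap : X ≤ X.comap (refl (form M) (sroot i)) := fun v hv => by
    rw [Submodule.mem_comap, refl_apply]
    exact X.sub_mem hv (X.smul_mem _ hi)
  have hdecomp : refl (form M) (sroot i) P = (P - P i • sroot i) + (-E P (sroot i)) • sroot i := by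
    rw [← h.refl_sroot_head hX.mem_coordSpace]
    simp only [refl_apply, Pi.sub_apply, Pi.smul_apply, sroot, Pi.single_eq_same, smul_eq_mul,
      mul_one]
    module
  refine cone_mono hcomap ?_
  rw [hdecomp]
  exact add_mem (cone_mono inf_le_left (hX.cut h hi).mem_cone) (PointedCone.smul_mem _
    (neg_nonneg.2 hneg) (PointedCone.subset_hull ⟨isRoot_sroot i, sroot_nonneg i, hi⟩))

lemma InNCCone.rotate [Finite W] (hX : InNCCone cs E (i :: L) P X) (h : Adapted M E (i :: L))
    (hneg : E P (sroot i) ≤ 0) :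
    InNCCone cs (E.comp (refl (form M) (sroot i)) (refl (form M) (sroot i))) (L ++ [i])
      (refl (form M) (sroot i) P) (X.comap (refl (form M) (sroot i))) := by
  obtain ⟨g, hg⟩ := hX.isNC
  refine ⟨⟨cs.simple i * g * cs.simple i, ?_⟩, fun v hv => ?_, ?_⟩
  · rw [map_mul, map_mul, rep_simple]
    exact hg.refl_conj h.euler (form_sroot_self i)
  · rw [← refl_refl (form_sroot_self i) v]
    exact refl_sroot_mem_coordSpace (hX.le hv)
  · by_cases hi : sroot i ∈ X
    exacts [hX.refl_sroot_mem_cone_of_nonpos h hi hneg, refl_sroot_mem_cone hi hX.mem_cone]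

/-- Some noncrossing subspace contained in both `X` and `Z` contains `P`. -/
def HasMeetAt (cs : CoxeterSystem M W) (E : LinearMap.BilinForm ℝ (B → ℝ)) (P : B → ℝ)
    (X Z : Submodule ℝ (B → ℝ)) : Prop :=
  ∃ Y g, IsNC (form M) E (rep cs g) Y ∧ Y ≤ X ∧ Y ≤ Z ∧ P ∈ Y

lemma hasMeetAt_zero (cs : CoxeterSystem M W) (E : LinearMap.BilinForm ℝ (B → ℝ))
    (X Z : Submodule ℝ (B → ℝ)) : HasMeetAt cs E 0 X Z :=
  ⟨⊥, 1, by rw [map_one]; exact isNC_one_bot _ _, bot_le, bot_le, zero_mem _⟩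

lemma HasMeetAt.of_cut (hE : IsEuler (form M) E) (hiX : sroot i ∈ X) (hiZ : sroot i ∈ Z)
    (h : HasMeetAt cs E (P - P i • sroot i) (X ⊓ LinearMap.ker (E (sroot i)))
      (Z ⊓ LinearMap.ker (E (sroot i)))) : HasMeetAt cs E P X Z := by
  obtain ⟨Y, g, hY, hYX, hYZ, hPY⟩ := h
  refine ⟨Y ⊔ ℝ ∙ sroot i, cs.simple i * g, ?_, ?_, ?_, ?_⟩
  · rw [map_mul, rep_simple]
    exact hY.refl_mul_sup_span hE (hYX.trans inf_le_right) (form_sroot_self i)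
  · exact sup_le (hYX.trans inf_le_left) ((Submodule.span_singleton_le_iff_mem _ _).2 hiX)
  · exact sup_le (hYZ.trans inf_le_left) ((Submodule.span_singleton_le_iff_mem _ _).2 hiZ)
  · rw [← sub_add_cancel P (P i • sroot i)]
    exact Submodule.add_mem_sup hPY (Submodule.mem_span_singleton.2 ⟨_, rfl⟩)

lemma HasMeetAt.of_refl (hE : IsEuler (form M) E)
    (h : HasMeetAt cs (E.comp (refl (form M) (sroot i)) (refl (form M) (sroot i)))
      (refl (form M) (sroot i) P) (X.comap (refl (form M) (sroot i)))
      (Z.comap (refl (form M) (sroot i)))) : HasMeetAt cs E P X Z := by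
  obtain ⟨Y, g, hY, hYX, hYZ, hPY⟩ := h
  have hinv := refl_refl (form_sroot_self (M := M) i)
  have hconj := hY.refl_conj (hE.comp_refl (form_sroot_self i)) (form_sroot_self i)
  rw [show (E.comp _ _).comp _ _ = E from
    LinearMap.ext₂ fun x y => by simp only [LinearMap.BilinForm.comp_apply, hinv],
    ← rep_simple cs, ← map_mul, ← map_mul] at hconj
  refine ⟨_, _, hconj, fun v hv => ?_, fun v hv => ?_, ?_⟩
  · simpa only [Submodule.mem_comap, rep_simple, hinv] using hYX hv
  · simpa only [Submodule.mem_comap, rep_simple, hinv] using hYZ hv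
  · rwa [rep_simple]

/-- `P` lies in the positive cones of two noncrossing subspaces for the word `L`, but not in a
noncrossing subspace contained in both: a counterexample to `hasMeetAt`. -/
def Unmet (cs : CoxeterSystem M W) (L : List B) (P : B → ℝ) : Prop :=
  ∃ E X Z, Adapted M E L ∧ InNCCone cs E L P X ∧ InNCCone cs E L P Z ∧ ¬ HasMeetAt cs E P X Z

lemma Unmet.rotate [Finite W] (h : Unmet cs (i :: L) P) (hL : ∀ Q, ¬ Unmet cs L Q) :
    Unmet cs (L ++ [i]) (rep cs (cs.simple i) P) := by
  obtain ⟨E, X, Z, hE, hX, hZ, hXZ⟩ := h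
  have hnot : ¬ (sroot i ∈ X ∧ sroot i ∈ Z) := fun ⟨hiX, hiZ⟩ => hL _
    ⟨E, _, _, hE.tail, hX.cut hE hiX, hZ.cut hE hiZ, fun h => hXZ (h.of_cut hE.euler hiX hiZ)⟩
  have hneg : E P (sroot i) ≤ 0 := by
    by_cases hiX : sroot i ∈ X
    · exact hZ.apply_sroot_nonpos hE fun hiZ => hnot ⟨hiX, hiZ⟩
    · exact hX.apply_sroot_nonpos hE hiX
  rw [rep_simple]
  exact ⟨_, _, _, hE.rotate, hX.rotate hE hneg, hZ.rotate hE hneg,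
    fun h => hXZ (h.of_refl hE.euler)⟩

lemma Unmet.rotate_append [Finite W] {n : ℕ}
    (hn : ∀ (L : List B) (Q : B → ℝ), L.length = n → ¬ Unmet cs L Q) (L₁ L₂ : List B)
    (hlen : (L₁ ++ L₂).length = n + 1) (h : Unmet cs (L₁ ++ L₂) P) :
    Unmet cs (L₂ ++ L₁) (rep cs (cs.wordProd L₁)⁻¹ P) := by
  induction L₁ generalizing L₂ P with
  | nil => simpa using h
  | cons i L₁ ih =>
    have hrot := h.rotate fun Q => hn _ Q (by simpa using hlen)
    have := ih (L₂ ++ [i]) (by simpa [add_assoc] using hlen)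
      (List.append_assoc L₁ L₂ [i] ▸ hrot)
    rwa [List.append_assoc, List.singleton_append, ← rep_mul_apply, ← cs.inv_simple, ← mul_inv_rev,
      ← cs.wordProd_cons] at this

theorem not_unmet [Finite W] (cs : CoxeterSystem M W) (L : List B) (P : B → ℝ) :
    ¬ Unmet cs L P := by
  induction hn : L.length generalizing L P with
  | zero =>
    rintro ⟨E, X, Z, -, hX, -, hXZ⟩
    have hP := hX.mem_coordSpace
    rw [List.length_eq_zero_iff.1 hn, coordSpace_nil, Submodule.mem_bot] at hP
    exact hXZ (hP ▸ hasMeetAt_zero cs E X Z)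
  | succ n ih =>
    intro hP
    have horbit : ∀ m : ℕ, Unmet cs L (rep cs ((cs.wordProd L)⁻¹ ^ m) P) := by
      intro m
      induction m with
      | zero => simpa using hP
      | succ m ihm =>
        rw [pow_succ', rep_mul_apply]
        simpa using Unmet.rotate_append ih L [] (by simpa using hn) (by simpa using ihm)
    obtain ⟨E, X, Z, hE, -, -, hXZ⟩ := id hP
    refine hXZ ?_
    rw [hE.eq_zero_of_forall_nonneg (cs := cs) (P := P)]
    · exact hasMeetAt_zero cs E X Z
    · exact fun m => let ⟨_, _, _, _, hX, _⟩ := horbit m; hX.mem_coordSpace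
    · exact fun m => let ⟨_, _, _, _, hX, _⟩ := horbit m; nonneg_of_mem_cone hX.mem_cone

theorem hasMeetAt [Finite W] (h : Adapted M E L) (hX : InNCCone cs E L P X)
    (hZ : InNCCone cs E L P Z) : HasMeetAt cs E P X Z :=
  by_contra fun hXZ => not_unmet cs L P ⟨E, X, Z, h, hX, hZ, hXZ⟩

theorem exists_isNC_inf [Finite W] (h : Adapted M E L) {x z : W}
    (hX : IsNC (form M) E (rep cs x) X) (hXL : X ≤ coordSpace L)
    (hZ : IsNC (form M) E (rep cs z) Z) (hZL : Z ≤ coordSpace L) :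
    ∃ Y y, IsNC (form M) E (rep cs y) Y ∧ Y ≤ X ∧ Y ≤ Z ∧
      ∀ A a, IsNC (form M) E (rep cs a) A → A ≤ X → A ≤ Z → A ≤ Y := by
  have hfin : {U | ∃ g, IsNC (form M) E (rep cs g) U}.Finite := by
    refine (Set.finite_range fun g : W => LinearMap.range (1 - rep cs g)).subset ?_
    rintro U ⟨g, hg⟩
    exact ⟨g, (hg.eq_range (form_self_pos cs)).symm⟩
  obtain ⟨P, hP, hgen⟩ := exists_mem_hull_generic
    (finite_setOf_isRoot.subset fun ρ hρ => hρ.1 : (posRoots cs (X ⊓ Z)).Finite) hfin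
  obtain ⟨Y, y, hY, hYX, hYZ, hPY⟩ := hasMeetAt h
    (hX := ⟨⟨x, hX⟩, hXL, cone_mono inf_le_left hP⟩)
    (hZ := ⟨⟨z, hZ⟩, hZL, cone_mono inf_le_right hP⟩)
  refine ⟨Y, y, hY, hYX, hYZ, fun A a hA hAX hAZ => ?_⟩
  calc A ≤ Submodule.span ℝ (posRoots cs A) := hA.le_span_posRoots h.euler
    _ ≤ Y := Submodule.span_le.2 <| (posRoots_mono (le_inf hAX hAZ)).trans (hgen Y ⟨y, hY⟩ hPY)

end Meet

/-! ### The reflection order -/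

section Order

variable {cs : CoxeterSystem M W} {u v w p s y : W}

lemma rlen_prod_le {l : List W} (hl : ∀ t ∈ l, cs.IsReflection t) : rlen cs l.prod ≤ l.length :=
  Nat.sInf_le ⟨l, hl, rfl, rfl⟩

lemma exists_list_length_eq_rlen (cs : CoxeterSystem M W) (w : W) :
    ∃ l : List W, (∀ t ∈ l, cs.IsReflection t) ∧ l.length = rlen cs w ∧ l.prod = w := by
  obtain ⟨ω, rfl⟩ := cs.wordProd_surjective w
  refine Nat.sInf_mem (s := {k | ∃ l : List W, (∀ t ∈ l, cs.IsReflection t) ∧ l.length = k ∧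
    l.prod = cs.wordProd ω}) ⟨_, ω.map cs.simple, ?_, rfl, rfl⟩
  rintro _ ht
  obtain ⟨i, -, rfl⟩ := List.mem_map.1 ht
  exact cs.isReflection_simple i

lemma rlen_one (cs : CoxeterSystem M W) : rlen cs 1 = 0 :=
  Nat.le_zero.1 (rlen_prod_le (List.forall_mem_nil _))

lemma rlen_le_one (hw : cs.IsReflection w) : rlen cs w ≤ 1 := by
  simpa using rlen_prod_le (cs := cs) (l := [w]) (by simpa using hw)

lemma eq_one_of_rlen_eq_zero (h : rlen cs w = 0) : w = 1 := by
  obtain ⟨l, -, hl, rfl⟩ := exists_list_length_eq_rlen cs w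
  rw [List.length_eq_zero_iff.1 (hl.trans h), List.prod_nil]

lemma rlen_mul_le (cs : CoxeterSystem M W) (u v : W) :
    rlen cs (u * v) ≤ rlen cs u + rlen cs v := by
  obtain ⟨l, hl, hlu, rfl⟩ := exists_list_length_eq_rlen cs u
  obtain ⟨l', hl', hlv, rfl⟩ := exists_list_length_eq_rlen cs v
  rw [← hlu, ← hlv, ← List.length_append, ← List.prod_append]
  exact rlen_prod_le fun t ht => (List.mem_append.1 ht).elim (hl t) (hl' t)

lemma rlen_conj_le (cs : CoxeterSystem M W) (v w : W) :
    rlen cs (MulAut.conj v w) ≤ rlen cs w := by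
  obtain ⟨l, hl, hlw, rfl⟩ := exists_list_length_eq_rlen cs w
  rw [← hlw, map_list_prod, ← List.length_map (MulAut.conj v)]
  refine rlen_prod_le fun t ht => ?_
  obtain ⟨t, ht', rfl⟩ := List.mem_map.1 ht
  exact (hl t ht').conj v

lemma rlen_conj (cs : CoxeterSystem M W) (v w : W) : rlen cs (MulAut.conj v w) = rlen cs w := by
  refine le_antisymm (rlen_conj_le cs v w) ?_
  simpa [mul_assoc] using rlen_conj_le cs v⁻¹ (MulAut.conj v w)

lemma rle_conj_iff : rle cs (MulAut.conj v u) (MulAut.conj v w) ↔ rle cs u w := by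
  simp only [rle, ← map_inv, ← map_mul, rlen_conj]

lemma rle_trans (huv : rle cs u v) (hvw : rle cs v w) : rle cs u w := by
  have hw := rlen_mul_le cs u (u⁻¹ * w)
  have huw := rlen_mul_le cs (u⁻¹ * v) (v⁻¹ * w)
  rw [mul_inv_cancel_left] at hw
  rw [mul_assoc, mul_inv_cancel_left] at huw
  unfold rle at *
  omega

lemma rle_antisymm (huv : rle cs u v) (hvu : rle cs v u) : u = v := by
  unfold rle at *
  exact inv_mul_eq_one.1 (eq_one_of_rlen_eq_zero (by omega : rlen cs (u⁻¹ * v) = 0))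

lemma rle_inv_mul_inv_mul (hup : rle cs u p) (hps : rle cs p s) :
    rle cs (u⁻¹ * p) (u⁻¹ * s) := by
  have hus := rle_trans hup hps
  unfold rle at *
  rw [mul_inv_rev, inv_inv, mul_assoc, mul_inv_cancel_left]
  omega

lemma inv_mul_rle (hus : rle cs u s) : rle cs (u⁻¹ * s) s := by
  have hconj : (u⁻¹ * s)⁻¹ * s = MulAut.conj s⁻¹ u := by simp
  unfold rle at *
  rw [hconj, rlen_conj]
  omega

lemma rle_mul_and_mul_rle (hus : rle cs u s) (hy : rle cs y (u⁻¹ * s)) :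
    rle cs u (u * y) ∧ rle cs (u * y) s := by
  have huy := rlen_mul_le cs u y
  have hs := rlen_mul_le cs (u * y) (y⁻¹ * (u⁻¹ * s))
  rw [mul_assoc, mul_inv_cancel_left, mul_inv_cancel_left] at hs
  unfold rle at *
  rw [inv_mul_cancel_left, mul_inv_rev, mul_assoc]
  omega

lemma rle_mul_of_inv_mul_rle (hup : rle cs u p) (huy : rle cs u (u * y))
    (h : rle cs (u⁻¹ * p) y) : rle cs p (u * y) := by
  unfold rle at *
  rw [inv_mul_cancel_left] at huy
  rw [mul_inv_rev, inv_inv, mul_assoc] at h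
  omega

end Order

section NoncrossingOrder

variable [Fintype B] [DecidableEq B] {cs : CoxeterSystem M W}
  {E : LinearMap.BilinForm ℝ (B → ℝ)} {g t x z : W} {X Z : Submodule ℝ (B → ℝ)} {ρ : B → ℝ}

lemma finrank_range_one_sub_rep_le (cs : CoxeterSystem M W) (w : W) :
    Module.finrank ℝ (LinearMap.range (1 - rep cs w)) ≤ rlen cs w := by
  obtain ⟨l, hl, hlw, rfl⟩ := exists_list_length_eq_rlen cs w
  rw [← hlw]
  clear hlw
  induction l with
  | nil => rw [List.prod_nil, map_one, sub_self, LinearMap.range_zero, finrank_bot, List.length_nil]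
  | cons t l ih =>
    obtain ⟨ρ, -, ht⟩ := exists_isRoot_of_isReflection (hl t List.mem_cons_self)
    rw [List.prod_cons, map_mul, ht, List.length_cons]
    exact (finrank_range_one_sub_refl_mul_le _ _ _).trans
      (Nat.add_le_add_right (ih (List.forall_mem_of_forall_mem_cons hl)) 1)

variable [Finite W]

lemma IsNC.rlen_eq (hE : IsEuler (form M) E) (h : IsNC (form M) E (rep cs g) X) :
    rlen cs g = Module.finrank ℝ X := by
  refine le_antisymm ?_ ((h.eq_range (form_self_pos cs)) ▸ finrank_range_one_sub_rep_le cs g)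
  induction hn : Module.finrank ℝ X generalizing g X with
  | zero =>
    rw [Submodule.finrank_eq_zero.1 hn] at h
    rw [rep_eq_one_iff.1 (h.eq_one_of_bot hE (form_self_pos cs)), rlen_one]
  | succ n ih =>
    obtain ⟨ρ, hρX, hρ⟩ := h.exists_isRoot hE (by rintro rfl; simp at hn)
    obtain ⟨t, htr, ht⟩ := hρ.exists_isReflection
    have hcut := h.refl_mul_inf_ker hE hρX hρ.form_self
    rw [← ht, ← map_mul] at hcut
    have hrank := finrank_inf_ker_add_one hρX (hE.apply_self_ne_zero hρ.form_self)
    calc rlen cs g = rlen cs (t * (t * g)) := by rw [← mul_assoc, htr.mul_self, one_mul]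
      _ ≤ rlen cs t + rlen cs (t * g) := rlen_mul_le cs _ _
      _ ≤ n + 1 := by linarith [rlen_le_one htr, ih hcut (by omega)]

lemma IsNC.rle_of_le (hE : IsEuler (form M) E) (hX : IsNC (form M) E (rep cs x) X)
    (hZ : IsNC (form M) E (rep cs z) Z) (hXZ : X ≤ Z) : rle cs x z := by
  induction hn : Module.finrank ℝ X generalizing x z X Z with
  | zero =>
    rw [Submodule.finrank_eq_zero.1 hn] at hX
    rw [rep_eq_one_iff.1 (hX.eq_one_of_bot hE (form_self_pos cs)), rle, rlen_one, inv_one, one_mul,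
      zero_add]
  | succ n ih =>
    obtain ⟨ρ, hρX, hρ⟩ := hX.exists_isRoot hE (by rintro rfl; simp at hn)
    obtain ⟨t, -, ht⟩ := hρ.exists_isReflection
    have hEρ := hE.apply_self_ne_zero hρ.form_self
    have hXcut := hX.refl_mul_inf_ker hE hρX hρ.form_self
    have hZcut := hZ.refl_mul_inf_ker hE (hXZ hρX) hρ.form_self
    rw [← ht, ← map_mul] at hXcut hZcut
    have hXrank := finrank_inf_ker_add_one hρX hEρ
    have hZrank := finrank_inf_ker_add_one (hXZ hρX) hEρ
    have hcut := ih hXcut hZcut (inf_le_inf_right _ hXZ) (by omega)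
    rw [rle, hXcut.rlen_eq hE, hZcut.rlen_eq hE, mul_inv_rev, mul_assoc,
      inv_mul_cancel_left] at hcut
    rw [rle, hX.rlen_eq hE, hZ.rlen_eq hE]
    omega

-- By a dimension count, `im (1 - z)` is all of `im (1 - t z) + ℝ ρ`.
lemma IsNC.mem_of_rlen_mul_lt (hE : IsEuler (form M) E) (hZ : IsNC (form M) E (rep cs z) Z)
    (ht : rep cs t = refl (form M) ρ) (htr : cs.IsReflection t)
    (hlt : rlen cs (t * z) < rlen cs z) : ρ ∈ Z := by
  have hle : Z ≤ LinearMap.range (1 - rep cs (t * z)) ⊔ ℝ ∙ ρ := by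
    have := range_one_sub_refl_mul_le (form M) ρ (rep cs (t * z))
    rwa [← ht, ← map_mul, ← mul_assoc, htr.mul_self, one_mul,
      ← hZ.eq_range (form_self_pos cs)] at this
  have hrank := finrank_sup_span_singleton_le (LinearMap.range (1 - rep cs (t * z))) ρ
  have hrlen := finrank_range_one_sub_rep_le cs (t * z)
  rw [hZ.rlen_eq hE] at hlt
  rw [Submodule.eq_of_le_of_finrank_le hle (by omega)]
  exact Submodule.mem_sup_right (Submodule.mem_span_singleton_self ρ)

lemma IsNC.exists_le_of_prod_mul (hE : IsEuler (form M) E) {l : List W}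
    (hl : ∀ t ∈ l, cs.IsReflection t) (hZ : IsNC (form M) E (rep cs (l.prod * x)) Z)
    (hlen : rlen cs (l.prod * x) = l.length + rlen cs x) :
    ∃ X ≤ Z, IsNC (form M) E (rep cs x) X := by
  induction l generalizing Z with
  | nil => exact ⟨Z, le_rfl, by rwa [List.prod_nil, one_mul] at hZ⟩
  | cons t l ih =>
    have htr := hl t List.mem_cons_self
    have hl' := List.forall_mem_of_forall_mem_cons hl
    have hcancel : t * ((t :: l).prod * x) = l.prod * x := by
      rw [List.prod_cons, ← mul_assoc, ← mul_assoc, htr.mul_self, one_mul]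
    obtain ⟨ρ, hρ, ht⟩ := exists_isRoot_of_isReflection htr
    have hle : rlen cs (l.prod * x) ≤ l.length + rlen cs x :=
      (rlen_mul_le cs _ _).trans (Nat.add_le_add_right (rlen_prod_le hl') _)
    rw [List.length_cons] at hlen
    have hρZ := hZ.mem_of_rlen_mul_lt hE ht htr (by rw [hcancel]; omega)
    have hcut := hZ.refl_mul_inf_ker hE hρZ hρ.form_self
    rw [← ht, ← map_mul, hcancel] at hcut
    have hrank := finrank_inf_ker_add_one hρZ (hE.apply_self_ne_zero hρ.form_self)
    rw [hZ.rlen_eq hE] at hlen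
    obtain ⟨X, hXZ, hX⟩ := ih hl' hcut (by rw [hcut.rlen_eq hE]; omega)
    exact ⟨X, hXZ.trans inf_le_left, hX⟩

lemma IsNC.exists_le_of_rle (hE : IsEuler (form M) E) (hZ : IsNC (form M) E (rep cs z) Z)
    (h : rle cs x z) : ∃ X ≤ Z, IsNC (form M) E (rep cs x) X := by
  obtain ⟨l, hl, hlen, hprod⟩ := exists_list_length_eq_rlen cs (z * x⁻¹)
  have hz : l.prod * x = z := by rw [hprod, inv_mul_cancel_right]
  have hconj : z * x⁻¹ = MulAut.conj x (x⁻¹ * z) := by simp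
  rw [hconj, rlen_conj] at hlen
  refine IsNC.exists_le_of_prod_mul hE hl (by rwa [hz]) ?_
  rw [hz, hlen, add_comm]
  exact h

end NoncrossingOrder

/-! ### Meets and joins below a Coxeter element -/

section CoxeterElement

/-- The Euler form adapted to a word `L` containing every letter exactly once. -/
noncomputable def eulerForm [Fintype B] [DecidableEq B] (M : CoxeterMatrix B) (L : List B) :
    LinearMap.BilinForm ℝ (B → ℝ) :=
  Matrix.toBilin' <| Matrix.of fun i j =>
    if L.idxOf i < L.idxOf j then 0 else if i = j then 1 else 2 * form M (sroot i) (sroot j)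

lemma eulerForm_sroot [Fintype B] [DecidableEq B] (M : CoxeterMatrix B) (L : List B) (i j : B) :
    eulerForm M L (sroot i) (sroot j) =
      if L.idxOf i < L.idxOf j then 0 else if i = j then 1 else 2 * form M (sroot i) (sroot j) := by
  simp only [eulerForm, sroot, Matrix.toBilin'_single, Matrix.of_apply]

lemma isEuler_eulerForm [Fintype B] [DecidableEq B] (M : CoxeterMatrix B) {L : List B}
    (hL : ∀ i, i ∈ L) : IsEuler (form M) (eulerForm M L) := by
  suffices eulerForm M L + (eulerForm M L).flip = (2 : ℝ) • form M from
    fun x y => LinearMap.congr_fun₂ this x y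
  refine LinearMap.BilinForm.ext_basis (Pi.basisFun ℝ B) fun i j => ?_
  rw [Pi.basisFun_apply, Pi.basisFun_apply]
  change eulerForm M L (sroot i) (sroot j) + eulerForm M L (sroot j) (sroot i) =
    2 * form M (sroot i) (sroot j)
  rw [eulerForm_sroot, eulerForm_sroot]
  obtain rfl | hij := eq_or_ne i j
  · rw [if_neg (lt_irrefl _), if_pos rfl, form_sroot_self]
    norm_num
  · rcases lt_or_gt_of_ne fun h => hij ((List.idxOf_inj (hL i)).1 h) with h | h
    · rw [if_pos h, if_neg h.not_gt, if_neg hij.symm, zero_add, (form_isSymm M).eq]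
    · rw [if_neg h.not_gt, if_neg hij, if_pos h, add_zero]

lemma adapted_eulerForm [Fintype B] [DecidableEq B] {L : List B} (hL : L.Nodup)
    (hall : ∀ i, i ∈ L) : Adapted M (eulerForm M L) L := by
  refine ⟨isEuler_eulerForm M hall, hL, List.pairwise_iff_getElem.2 fun i j hi hj hij => ?_⟩
  rw [eulerForm_sroot, if_pos]
  rwa [hL.idxOf_getElem, hL.idxOf_getElem]

variable [Finite W] {cs : CoxeterSystem M W} {γ u v w x z p r s : W}

lemma exists_meet_of_rle_wordProd {L : List B} (hL : L.Nodup) (hall : ∀ i, i ∈ L)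
    (hx : rle cs x (cs.wordProd L)) (hz : rle cs z (cs.wordProd L)) :
    ∃ y, rle cs y x ∧ rle cs y z ∧ ∀ a, rle cs a x → rle cs a z → rle cs a y := by
  classical
  let _ := Fintype.ofList L hall
  have hA := adapted_eulerForm (M := M) hL hall
  have hE := hA.euler
  obtain ⟨X, hXL, hX⟩ := hA.isNC.exists_le_of_rle hE hx
  obtain ⟨Z, hZL, hZ⟩ := hA.isNC.exists_le_of_rle hE hz
  obtain ⟨Y, y, hY, hYX, hYZ, hmax⟩ := exists_isNC_inf hA hX hXL hZ hZL
  refine ⟨y, hY.rle_of_le hE hX hYX, hY.rle_of_le hE hZ hYZ, fun a hax haz => ?_⟩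
  obtain ⟨A, hAX, hA⟩ := hX.exists_le_of_rle hE hax
  obtain ⟨A', hAZ, hA'⟩ := hZ.exists_le_of_rle hE haz
  rw [hA'.eq_range (form_self_pos cs), ← hA.eq_range (form_self_pos cs)] at hAZ
  exact hA.rle_of_le hE hY (hmax A a hA hAX hAZ)

variable [Fintype B]

theorem exists_meet (hγ : IsCoxeterElement cs γ) (hx : rle cs x γ) (hz : rle cs z γ) :
    ∃ y, rle cs y x ∧ rle cs y z ∧ ∀ a, rle cs a x → rle cs a z → rle cs a y := by
  obtain ⟨v, L, hL, hall, rfl⟩ := hγ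
  obtain ⟨x, rfl⟩ := (MulAut.conj v).surjective x
  obtain ⟨z, rfl⟩ := (MulAut.conj v).surjective z
  rw [← MulAut.conj_apply, rle_conj_iff] at hx hz
  obtain ⟨y, hyx, hyz, hy⟩ := exists_meet_of_rle_wordProd hL hall hx hz
  exact ⟨MulAut.conj v y, rle_conj_iff.2 hyx, rle_conj_iff.2 hyz,
    (MulAut.conj v).surjective.forall.2 fun a hax haz =>
      rle_conj_iff.2 (hy a (rle_conj_iff.1 hax) (rle_conj_iff.1 haz))⟩

theorem inv_mul_isIntervalLUB (hγ : IsCoxeterElement cs γ) (hp : IsIntervalLUB cs γ {u, v} p)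
    (hr : IsIntervalLUB cs γ {u, w} r) (hs : IsIntervalLUB cs γ {u, v, w} s) :
    IsIntervalLUB cs γ {u⁻¹ * p, u⁻¹ * r} (u⁻¹ * s) := by
  obtain ⟨-, hp_ub, hp_least⟩ := hp
  obtain ⟨-, hr_ub, hr_least⟩ := hr
  obtain ⟨hsγ, hs_ub, hs_least⟩ := hs
  simp only [Set.forall_mem_insert, Set.mem_singleton_iff,
    forall_eq] at hp_ub hr_ub hs_ub hp_least hr_least hs_least
  have hps : rle cs p s := hp_least s hsγ ⟨hs_ub.1, hs_ub.2.1⟩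
  have hrs : rle cs r s := hr_least s hsγ ⟨hs_ub.1, hs_ub.2.2⟩
  have hup' := rle_inv_mul_inv_mul hp_ub.1 hps
  have hur' := rle_inv_mul_inv_mul hr_ub.1 hrs
  have hus : rle cs (u⁻¹ * s) γ := rle_trans (inv_mul_rle hs_ub.1) hsγ
  refine ⟨hus, ?_, fun x hxγ hx => ?_⟩
  · simpa using ⟨hup', hur'⟩
  simp only [Set.forall_mem_insert, Set.mem_singleton_iff, forall_eq] at hx
  obtain ⟨y, hyx, hys, hy⟩ := exists_meet hγ hxγ hus
  obtain ⟨huy, huys⟩ := rle_mul_and_mul_rle hs_ub.1 hys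
  have hpy : rle cs p (u * y) := rle_mul_of_inv_mul_rle hp_ub.1 huy (hy _ hx.1 hup')
  have hry : rle cs r (u * y) := rle_mul_of_inv_mul_rle hr_ub.1 huy (hy _ hx.2 hur')
  have hsy : rle cs s (u * y) := hs_least _ (rle_trans huys hsγ)
    ⟨huy, rle_trans hp_ub.2 hpy, rle_trans hr_ub.2 hry⟩
  rwa [← rle_antisymm huys hsy, inv_mul_cancel_left]

theorem mul_eq_mul_and_isIntervalLUB (hγ : IsCoxeterElement cs γ)
    (hp : IsIntervalLUB cs γ {u, v} p) (hr : IsIntervalLUB cs γ {u, w} r)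
    (hs : IsIntervalLUB cs γ {u, v, w} s) {a e g i : W} (hua : u * a = p) (hue : u * e = r)
    (hpg : p * g = s) (hri : r * i = s) :
    a * g = e * i ∧ IsIntervalLUB cs γ {a, e} (a * g) := by
  have hlub := inv_mul_isIntervalLUB hγ hp hr hs
  subst hua hue
  rw [mul_assoc] at hpg hri
  rw [inv_mul_cancel_left, inv_mul_cancel_left, ← hpg, inv_mul_cancel_left] at hlub
  exact ⟨mul_left_cancel (hpg.trans hri.symm), hlub⟩

end CoxeterElement

end Noncrossing

/-- Brady's Lemma 3.11: compatibility of joins with the group structure in `[1,γ]`. -/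
theorem joins_compatible [Fintype B] [Fintype W] (cs : CoxeterSystem M W) (γ : W)
    (hγ : IsCoxeterElement cs γ) (u v w : W)
    (hu : rle cs u γ) (hv : rle cs v γ) (hw : rle cs w γ)
    (p q r s : W) (a b c d e f g h i : W)
    (hp : IsIntervalLUB cs γ {u, v} p) (hq : IsIntervalLUB cs γ {v, w} q)
    (hr : IsIntervalLUB cs γ {u, w} r) (hs : IsIntervalLUB cs γ {u, v, w} s)
    (hua : u * a = p) (hvb : v * b = p)
    (hvc : v * c = q) (hwd : w * d = q)
    (hue : u * e = r) (hwf : w * f = r)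
    (hpg : p * g = s) (hqh : q * h = s) (hri : r * i = s) :
    (a * g = e * i ∧ IsIntervalLUB cs γ {a, e} (a * g)) ∧
    (b * g = c * h ∧ IsIntervalLUB cs γ {b, c} (b * g)) ∧
    (d * h = f * i ∧ IsIntervalLUB cs γ {d, f} (d * h)) := by
  have hsv : IsIntervalLUB cs γ {v, u, w} s := by rwa [Set.insert_comm]
  have hsw : IsIntervalLUB cs γ {w, v, u} s := by
    rwa [Set.pair_comm v u, Set.insert_comm, Set.pair_comm w v]
  exact ⟨Noncrossing.mul_eq_mul_and_isIntervalLUB hγ hp hr hs hua hue hpg hri,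
    Noncrossing.mul_eq_mul_and_isIntervalLUB hγ (Set.pair_comm u v ▸ hp) hq hsv hvb hvc hpg hqh,
    Noncrossing.mul_eq_mul_and_isIntervalLUB hγ (Set.pair_comm v w ▸ hq) (Set.pair_comm u w ▸ hr)
      hsw hwd hwf hqh hri⟩
end

section
/- Let v, b, c, g, h ∈ [1,γ] with v ≤ vb, v ≤ vc, and vb, vc, vbg ∈ [1,γ], and suppose bg = ch and bg is a least upper bound of {b,c} in ([1,γ],≤). If m ∈ [1,γ] is a least upper bound of {vb, vc} in ([1,γ],≤), then m = vbg = vch. -/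
variable {B : Type*} {W : Type*} [Group W] {M : CoxeterMatrix B}

/-!
The order `u ≤ w` says that `u` lies on a geodesic from `1` to `w` for the left-invariant, possibly
asymmetric, distance `ℓ (u⁻¹ * w)`, and left translation by `v` identifies the interval `[1, x]`
with `[v, v * x]` as soon as `v ≤ v * x`.

Let `j` be the join of `s = {b, c}` in `[1, γ]`, and write the join `m` of `v * s` as `v * x`.
Translating back from `[v, m]`, every element of `s` is below `x`. Conjugation invariance of `ℓ`
gives `x ≤ m ≤ γ`, so `j ≤ x`. Translating `j ≤ x` forward gives `v ≤ v * j ≤ m`, and translating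
`s ≤ j` forward shows that `v * j` is an upper bound of `v * s`, whence `m ≤ v * j`.
-/

section LengthOrder

variable {G R : Type*} [Group G] {ℓ : G → R} {u v w x y : G}

/-- The order on a group defined by a length function `ℓ`: `u` is below `w` when the factorization
`w = u * (u⁻¹ * w)` is length-additive. For `ℓ = rlen cs` this unfolds to `rle cs`. -/
def LengthLE [Add R] (ℓ : G → R) (u w : G) : Prop :=
  ℓ w = ℓ u + ℓ (u⁻¹ * w)

/-- `p` is a least upper bound of `s` within the elements below `γ` in the order `LengthLE ℓ`. For
`ℓ = rlen cs` this unfolds to `IsIntervalLUB cs`. -/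
def IsLengthLUB [Add R] (ℓ : G → R) (γ : G) (s : Set G) (p : G) : Prop :=
  LengthLE ℓ p γ ∧ (∀ x ∈ s, LengthLE ℓ x p) ∧
    ∀ r, LengthLE ℓ r γ → (∀ x ∈ s, LengthLE ℓ x r) → LengthLE ℓ p r

theorem lengthLE_mul_right_iff [Add R] : LengthLE ℓ u (u * w) ↔ ℓ (u * w) = ℓ u + ℓ w := by
  rw [LengthLE, inv_mul_cancel_left]

theorem lengthLE_iff_add_le [Add R] [PartialOrder R] (hmul : ∀ u w, ℓ (u * w) ≤ ℓ u + ℓ w) :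
    LengthLE ℓ u w ↔ ℓ u + ℓ (u⁻¹ * w) ≤ ℓ w := by
  have hw : ℓ w ≤ ℓ u + ℓ (u⁻¹ * w) := by simpa only [mul_inv_cancel_left] using hmul u (u⁻¹ * w)
  exact ⟨ge_of_eq, hw.antisymm⟩

namespace LengthLE

theorem right_factor [AddCommMagma R] (hconj : ∀ u w, ℓ (u * w * u⁻¹) = ℓ w)
    (h : LengthLE ℓ v (v * x)) : LengthLE ℓ x (v * x) := by
  have hv : ℓ (x⁻¹ * (v * x)) = ℓ v := by
    simpa only [inv_inv, mul_assoc] using hconj x⁻¹ v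
  rw [LengthLE, hv, add_comm, lengthLE_mul_right_iff.1 h]

variable [AddCommMonoid R] [PartialOrder R]

theorem trans [IsOrderedAddMonoid R] (hmul : ∀ u w, ℓ (u * w) ≤ ℓ u + ℓ w)
    (huv : LengthLE ℓ u v) (hvw : LengthLE ℓ v w) : LengthLE ℓ u w := by
  have hsplit : u⁻¹ * w = u⁻¹ * v * (v⁻¹ * w) := by group
  rw [lengthLE_iff_add_le hmul]
  calc ℓ u + ℓ (u⁻¹ * w)
      ≤ ℓ u + (ℓ (u⁻¹ * v) + ℓ (v⁻¹ * w)) := by rw [hsplit]; gcongr; exact hmul _ _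
    _ = ℓ v + ℓ (v⁻¹ * w) := by rw [← add_assoc, ← huv]
    _ = ℓ w := hvw.symm

variable [IsOrderedCancelAddMonoid R]

theorem lt_of_ne (hpos : ∀ w, w ≠ 1 → 0 < ℓ w) (h : LengthLE ℓ u w) (hne : u ≠ w) :
    ℓ u < ℓ w := by
  rw [h]
  exact lt_add_of_pos_right _ (hpos _ (mt inv_mul_eq_one.1 hne))

theorem antisymm (hpos : ∀ w, w ≠ 1 → 0 < ℓ w) (huw : LengthLE ℓ u w) (hwu : LengthLE ℓ w u) :
    u = w := by
  by_contra hne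
  exact lt_asymm (huw.lt_of_ne hpos hne) (hwu.lt_of_ne hpos (Ne.symm hne))

theorem translate_iff (hmul : ∀ u w, ℓ (u * w) ≤ ℓ u + ℓ w) (hvx : LengthLE ℓ v (v * x)) :
    LengthLE ℓ v (v * y) ∧ LengthLE ℓ (v * y) (v * x) ↔ LengthLE ℓ y x := by
  have hquot : (v * y)⁻¹ * (v * x) = y⁻¹ * x := by group
  rw [lengthLE_mul_right_iff] at hvx ⊢
  constructor
  · rintro ⟨hvy, hyx⟩
    rw [LengthLE, hquot, hvx, hvy, add_assoc] at hyx
    exact add_left_cancel hyx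
  · intro hyx
    have hvy : ℓ (v * y) = ℓ v + ℓ y := by
      refine (hmul v y).antisymm (le_of_add_le_add_right (a := ℓ (y⁻¹ * x)) ?_)
      calc ℓ v + ℓ y + ℓ (y⁻¹ * x)
          = ℓ (v * y * (y⁻¹ * x)) := by
            rw [add_assoc, ← hyx, ← hvx, mul_assoc, mul_inv_cancel_left]
        _ ≤ ℓ (v * y) + ℓ (y⁻¹ * x) := hmul _ _
    refine ⟨hvy, ?_⟩
    rw [LengthLE, hquot, hvx, hvy, hyx, add_assoc]

end LengthLE

theorem join_translate_general [AddCommMonoid R] [PartialOrder R] [IsOrderedCancelAddMonoid R]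
    (hmul : ∀ u w, ℓ (u * w) ≤ ℓ u + ℓ w) (hconj : ∀ u w, ℓ (u * w * u⁻¹) = ℓ w)
    (hpos : ∀ w, w ≠ 1 → 0 < ℓ w) {γ j m : G} {s : Set G} (hs : s.Nonempty)
    (hvs : ∀ b ∈ s, LengthLE ℓ v (v * b)) (hj : IsLengthLUB ℓ γ s j)
    (hm : IsLengthLUB ℓ γ ((v * ·) '' s) m) : m = v * j := by
  obtain ⟨-, hj_upper, hj_least⟩ := hj
  obtain ⟨hmγ, hm_upper, hm_least⟩ := hm
  rw [Set.forall_mem_image] at hm_upper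
  obtain ⟨x, rfl⟩ : ∃ x, m = v * x := ⟨v⁻¹ * m, (mul_inv_cancel_left v m).symm⟩
  have hvx : LengthLE ℓ v (v * x) := by
    obtain ⟨b, hb⟩ := hs
    exact (hvs b hb).trans hmul (hm_upper hb)
  have hjx : LengthLE ℓ j x :=
    hj_least x ((hvx.right_factor hconj).trans hmul hmγ) fun b hb =>
      (hvx.translate_iff hmul).1 ⟨hvs b hb, hm_upper hb⟩
  obtain ⟨hvj, hjm⟩ := (hvx.translate_iff hmul).2 hjx
  have hmj : LengthLE ℓ (v * x) (v * j) :=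
    hm_least _ (hjm.trans hmul hmγ) <| Set.forall_mem_image.2 fun b hb =>
      ((hvj.translate_iff hmul).2 (hj_upper b hb)).2
  exact hmj.antisymm hpos hjm

end LengthOrder

section ReflectionLength

variable (cs : CoxeterSystem M W)

theorem exists_reflections_length_eq_rlen (w : W) :
    ∃ l : List W, (∀ t ∈ l, cs.IsReflection t) ∧ l.length = rlen cs w ∧ l.prod = w := by
  obtain ⟨ω, hω⟩ := cs.wordProd_surjective w
  refine Nat.sInf_mem (s := {k | ∃ l : List W, (∀ t ∈ l, cs.IsReflection t) ∧ l.length = k ∧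
    l.prod = w}) ⟨_, ω.map cs.simple, ?_, rfl, hω⟩
  exact List.forall_mem_map.2 fun i _ => cs.isReflection_simple i

theorem rlen_prod_le_length {l : List W} (hl : ∀ t ∈ l, cs.IsReflection t) :
    rlen cs l.prod ≤ l.length :=
  Nat.sInf_le ⟨l, hl, rfl, rfl⟩

theorem rlen_mul_le (u w : W) : rlen cs (u * w) ≤ rlen cs u + rlen cs w := by
  obtain ⟨l, hl, hlen, rfl⟩ := exists_reflections_length_eq_rlen cs u
  obtain ⟨l', hl', hlen', rfl⟩ := exists_reflections_length_eq_rlen cs w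
  rw [← hlen, ← hlen', ← List.prod_append, ← List.length_append]
  exact rlen_prod_le_length cs (List.forall_mem_append.2 ⟨hl, hl'⟩)

theorem rlen_conj_le (u w : W) : rlen cs (u * w * u⁻¹) ≤ rlen cs w := by
  obtain ⟨l, hl, hlen, rfl⟩ := exists_reflections_length_eq_rlen cs w
  rw [← hlen, ← MulAut.conj_apply, map_list_prod, ← List.length_map (MulAut.conj u)]
  exact rlen_prod_le_length cs (List.forall_mem_map.2 fun t ht => (hl t ht).conj u)

theorem rlen_conj (u w : W) : rlen cs (u * w * u⁻¹) = rlen cs w := by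
  refine (rlen_conj_le cs u w).antisymm ?_
  have hback : u⁻¹ * (u * w * u⁻¹) * u⁻¹⁻¹ = w := by group
  simpa only [hback] using rlen_conj_le cs u⁻¹ (u * w * u⁻¹)

theorem rlen_pos (w : W) (hw : w ≠ 1) : 0 < rlen cs w := by
  obtain ⟨l, -, hlen, rfl⟩ := exists_reflections_length_eq_rlen cs w
  rw [← hlen, List.length_pos_iff]
  rintro rfl
  exact hw List.prod_nil

end ReflectionLength

/-- Brady's Lemma 4.3 (distributivity): if `b ∨ c = bg = ch` then
`vb ∨ vc = vbg = vch`. -/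
theorem join_translate [Fintype B] [Fintype W] (cs : CoxeterSystem M W) (γ : W)
    (hγ : IsCoxeterElement cs γ) (v b c g h : W)
    (hv : rle cs v γ) (hb : rle cs b γ) (hc : rle cs c γ)
    (hg : rle cs g γ) (hh : rle cs h γ)
    (hvb : rle cs v (v * b)) (hvc : rle cs v (v * c))
    (hvbI : rle cs (v * b) γ) (hvcI : rle cs (v * c) γ) (hvbgI : rle cs (v * b * g) γ)
    (hbg : b * g = c * h) (hjoin : IsIntervalLUB cs γ {b, c} (b * g))
    (m : W) (hm : IsIntervalLUB cs γ {v * b, v * c} m) :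
    m = v * b * g ∧ m = v * c * h := by
  have hvs : ∀ x ∈ ({b, c} : Set W), rle cs v (v * x) := by
    rintro x (rfl | rfl)
    exacts [hvb, hvc]
  rw [← Set.image_pair (v * ·)] at hm
  have hmj : m = v * (b * g) :=
    join_translate_general (rlen_mul_le cs) (rlen_conj cs) (rlen_pos cs) (Set.insert_nonempty b {c})
      hvs hjoin hm
  exact ⟨hmj.trans (mul_assoc v b g).symm, by rw [hmj, hbg, mul_assoc]⟩
end
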